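/- Let H be either H1 or H2. For all integers k ≥ 1 and r with 0 ≤ r ≤ k such that k−r is odd and r is even, GR_k((k−r)K3, rH) = 2·5^((k−r−1)/2)·17^(r/2) + 1. -/

import Mathlib

open SimpleGraph

/-- A rainbow triangle in an edge-coloring of a complete graph: three distinct
vertices whose three pairwise edges receive three pairwise distinct colors. -/
def HasRainbowTriangle {n k : ℕ} (c : Fin n → Fin n → Fin k) : Prop :=
  ∃ u v w : Fin n, u ≠ v ∧ u ≠ w ∧ v ≠ w ∧
    c u v ≠ c u w ∧ c u v ≠ c v w ∧ c u w ≠ c v w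

/-- A Gallai `k`-coloring of `K_n`: a symmetric edge-coloring with no rainbow triangle. -/
def IsGallaiColoring {n k : ℕ} (c : Fin n → Fin n → Fin k) : Prop :=
  (∀ u v, c u v = c v u) ∧ ¬ HasRainbowTriangle c

/-- A monochromatic copy of the graph `F` in color `i`: an injection of the vertices
of `F` into the vertices of `K_n` mapping every edge of `F` to an edge colored `i`. -/
def HasMonoCopy {V : Type} (F : SimpleGraph V) {n k : ℕ}
    (c : Fin n → Fin n → Fin k) (i : Fin k) : Prop :=
  ∃ f : V → Fin n, Function.Injective f ∧ ∀ a b, F.Adj a b → c (f a) (f b) = i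

/-- The Gallai-Ramsey number `GR(F₁, …, F_k)`: the least `n` such that every Gallai
`k`-coloring of `K_n` contains, for some color `i`, a monochromatic copy of `Fᵢ`
in color `i`. -/
noncomputable def GR (k : ℕ) (F : Fin k → Σ V : Type, SimpleGraph V) : ℕ :=
  sInf {n : ℕ | ∀ c : Fin n → Fin n → Fin k, IsGallaiColoring c →
    ∃ i : Fin k, HasMonoCopy (F i).2 c i}

/-- The triangle `K₃`. -/
def GK3 : SimpleGraph (Fin 3) := ⊤

/-- The path `P₃` on three vertices (edges 0–1 and 1–2). -/
def GP3 : SimpleGraph (Fin 3) := SimpleGraph.fromRel (fun a _ => a = 1)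

/-- `H₁`: a `K₄` on `{0,1,2,3}` together with the extra vertex `4` adjacent to
exactly the vertex `3`. -/
def GH1 : SimpleGraph (Fin 5) :=
  SimpleGraph.fromRel (fun a b => (a ≠ 4 ∧ b ≠ 4) ∨ (a = 3 ∧ b = 4))

/-- `H₂`: `K₅` minus the two edges 0–1 and 1–2 of a path on three vertices. -/
def GH2 : SimpleGraph (Fin 5) :=
  (⊤ : SimpleGraph (Fin 5)) \
    SimpleGraph.fromRel (fun a b => (a = 0 ∧ b = 1) ∨ (a = 1 ∧ b = 2))

/-- `H₃`: `K₅` minus the edge 0–1. -/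
def GH3 : SimpleGraph (Fin 5) :=
  (⊤ : SimpleGraph (Fin 5)) \ SimpleGraph.fromRel (fun a b => a = 0 ∧ b = 1)
/-- The family of graphs for `GR_k((k-r)K₃, rH)`: the graph `H` in each of the first
`r` colors and the triangle `K₃` in each of the remaining `k - r` colors. -/
def mixKH (k r : ℕ) (H : SimpleGraph (Fin 5)) : Fin k → Σ V : Type, SimpleGraph V :=
  fun i => if (i : ℕ) < r then ⟨Fin 5, H⟩ else ⟨Fin 3, GK3⟩

/-!
Gallai's theorem splits a Gallai colouring into classes joined in only two colours, the edges
between two classes all having the same colour. The upper bound is proved by induction on the number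
of vertices for all graphs contained in `GH2`, and with both kinds of colours in any number: each
triangle-free colour contributes a factor alternating between `2` and `5 / 2`, each other colour a
factor of `33 / 8` or `136 / 33`. The two colours of the partition are absent inside the
classes when there is one class per vertex of an extremal colouring with `5`, `8` or `17` vertices;
a class in which one of them survives is joined to the other classes in such a restrictive way that
all classes together are small. Conversely, iterated substitution of the two-colourings given by the
Paley graphs on `5` and `17` vertices attains the bound and avoids even `K₄`.
-/

namespace GallaiRamsey

open Finset

/-! ### Graphs without a copy of `GH2` -/

section Graphs

variable {V : Type*} {G G' : SimpleGraph V}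

theorem free_of_isContained {U W : Type*} {F : SimpleGraph U} {K : SimpleGraph W} (hKG : K ⊑ G)
    (hG : F.Free G) : F.Free K :=
  fun hFK ↦ hG (hFK.trans hKG)

theorem GH2_isContained {a b x y u : V} (hab : G.Adj a b) (hax : G.Adj a x) (hay : G.Adj a y)
    (hbx : G.Adj b x) (hby : G.Adj b y) (hxy : G.Adj x y) (hux : G.Adj u x) (huy : G.Adj u y)
    (hua : u ≠ a) (hub : u ≠ b) : GH2 ⊑ G := by
  have adj_map (i j : Fin 5) (hij : GH2.Adj i j) :
      G.Adj (![a, u, b, x, y] i) (![a, u, b, x, y] j) := by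
    fin_cases i <;> fin_cases j <;> simp_all [GH2, G.adj_comm]
  refine ⟨⟨⟨![a, u, b, x, y], fun {i j} ↦ adj_map i j⟩, fun i j hij ↦ ?_⟩⟩
  have := hab.ne; have := hax.ne; have := hay.ne; have := hbx.ne; have := hby.ne
  have := hxy.ne; have := hux.ne; have := huy.ne
  fin_cases i <;> fin_cases j <;> simp_all

theorem eq_of_adj_of_isNClique (hG : GH2.Free G) {Q : Finset V} (hQ : G.IsNClique 4 Q) {u x y : V}
    (hu : u ∉ Q) (hx : x ∈ Q) (hy : y ∈ Q) (hux : G.Adj u x) (huy : G.Adj u y) : x = y := by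
  classical
  by_contra hxy
  obtain ⟨a, b, hab, hQab⟩ : ∃ a b, a ≠ b ∧ (Q.erase x).erase y = {a, b} := by
    rw [← card_eq_two, card_erase_of_mem (mem_erase.2 ⟨Ne.symm hxy, hy⟩), card_erase_of_mem hx,
      hQ.card_eq]
  have ha : a ∈ (Q.erase x).erase y := by simp [hQab]
  have hb : b ∈ (Q.erase x).erase y := by simp [hQab]
  simp only [mem_erase] at ha hb
  have adj {p q : V} (hp : p ∈ Q) (hq : q ∈ Q) (hpq : p ≠ q) : G.Adj p q := hQ.isClique hp hq hpq
  exact hG <| GH2_isContained (adj ha.2.2 hb.2.2 hab) (adj ha.2.2 hx ha.2.1) (adj ha.2.2 hy ha.1)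
    (adj hb.2.2 hx hb.2.1) (adj hb.2.2 hy hb.1) (adj hx hy hxy) hux huy
    (ne_of_mem_of_not_mem ha.2.2 hu).symm (ne_of_mem_of_not_mem hb.2.2 hu).symm

theorem exists_forall_not_adj_of_isNClique (hG : GH2.Free G) {Q : Finset V} (hQ : G.IsNClique 4 Q) :
    ∃ m : V → V, ∀ u ∉ Q, ∀ q ∈ Q, q ≠ m u → ¬ G.Adj u q := by
  have (u : V) : ∃ p, u ∉ Q → ∀ q ∈ Q, q ≠ p → ¬ G.Adj u q := by
    by_cases h : ∃ p ∈ Q, G.Adj u p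
    · obtain ⟨p, hp, hup⟩ := h
      exact ⟨p, fun hu q hq hqp huq ↦ hqp (eq_of_adj_of_isNClique hG hQ hu hq hp huq hup)⟩
    · push Not at h
      exact ⟨u, fun _ q hq _ ↦ h q hq⟩
  choose m hm using this
  exact ⟨m, hm⟩

theorem card_le_four_of_isClique (hG : GH2.Free G) {S : Finset V} (hS : G.IsClique S) :
    #S ≤ 4 := by
  classical
  by_contra! h
  obtain ⟨Q, hQS, hQ⟩ := exists_subset_card_eq h.le
  obtain ⟨u, huS, huQ⟩ := exists_mem_notMem_of_card_lt_card (hQ.trans_lt h)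
  obtain ⟨x, hx, y, hy, hxy⟩ := one_lt_card.1 (by omega : 1 < #Q)
  have adj {q : V} (hq : q ∈ Q) : G.Adj u q := hS huS (hQS hq) (ne_of_mem_of_not_mem hq huQ).symm
  exact hxy <| eq_of_adj_of_isNClique hG ⟨hS.subset (coe_subset.2 hQS), hQ⟩ huQ hx hy (adj hx)
    (adj hy)

section Joins

variable {A X : Set V}

theorem cliqueFreeOn_three_of_isCompleteBetween (hG : GH2.Free G) (h : G.IsCompleteBetween A X)
    (hX : X.Nontrivial) : G.CliqueFreeOn A 3 := by
  classical
  obtain ⟨x, hx, y, hy, hxy⟩ := hX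
  intro t htA ht
  obtain ⟨a, b, d, hab, had, hbd, rfl⟩ := is3Clique_iff.1 ht
  simp only [coe_insert, coe_singleton, Set.insert_subset_iff, Set.singleton_subset_iff] at htA
  obtain ⟨ha, hb, hd⟩ := htA
  exact hG <| GH2_isContained (h hd hx).symm (h ha hx).symm (h hb hx).symm had.symm hbd.symm hab
    (h ha hy).symm (h hb hy).symm hxy.symm (h hd hy).ne'

theorem isIndepSet_of_isCompleteBetween (hG : GH2.Free G) {S : Finset V}
    (h : G.IsCompleteBetween S X) (hS : 3 ≤ #S) (hSI : ¬ G.IsIndepSet S) : G.IsIndepSet X := by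
  classical
  simp only [Set.Pairwise, not_forall, not_not] at hSI
  obtain ⟨p, hp, q, hq, -, hpq⟩ := hSI
  obtain ⟨s, hs, hspq⟩ : ∃ s ∈ S, s ∉ ({p, q} : Finset V) :=
    exists_mem_notMem_of_card_lt_card (card_le_two.trans_lt hS)
  simp only [mem_insert, mem_singleton, not_or] at hspq
  intro x hx y hy _ hxy
  exact hG <| GH2_isContained hpq (h hp hx) (h hp hy) (h hq hx) (h hq hy)
    hxy (h hs hx) (h hs hy) hspq.1 hspq.2

theorem isIndepSet_of_isCompleteBetween_of_cliqueFree (hG : G.CliqueFree 3)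
    (h : G.IsCompleteBetween A X) (hX : X.Nonempty) : G.IsIndepSet A := by
  classical
  obtain ⟨x, hx⟩ := hX
  exact fun a ha b hb _ hab ↦
    hG {x, a, b} (is3Clique_triple_iff.2 ⟨(h ha hx).symm, (h hb hx).symm, hab⟩)

/-- No vertex of `A` outside a triangle in `A` is adjacent to a vertex of the triangle: `A` spans
no copy of the paw, that is of a triangle with a pendant edge. -/
def PawFreeOn (G : SimpleGraph V) (A : Set V) : Prop :=
  ∀ ⦃t : Finset V⦄, ↑t ⊆ A → G.IsNClique 3 t → ∀ ⦃v⦄, v ∈ t → ∀ ⦃w⦄, w ∈ A → G.Adj v w → w ∈ t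

theorem PawFreeOn.anti {A' : Set V} (hA : A' ⊆ A) (h : PawFreeOn G A) : PawFreeOn G A' :=
  fun _ htA ht _ hv _ hw hvw ↦ h (htA.trans hA) ht hv (hA hw) hvw

theorem pawFreeOn_of_isCompleteBetween (hG : GH2.Free G) (h : G.IsCompleteBetween A X)
    (hX : X.Nonempty) : PawFreeOn G A := by
  classical
  obtain ⟨x, hx⟩ := hX
  intro t htA ht v hv w hw hvw
  by_contra hwt
  have hxt : x ∉ t := fun hxt ↦ G.irrefl (h (htA hxt) hx)
  have hQ : G.IsNClique 4 (insert x t) := ht.insert fun b hb ↦ (h (htA hb) hx).symm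
  have hwQ : w ∉ insert x t := by
    simp only [mem_insert, not_or]
    exact ⟨(h hw hx).ne, hwt⟩
  exact ne_of_mem_of_not_mem hv hxt <| eq_of_adj_of_isNClique hG hQ hwQ (mem_insert_of_mem hv)
    (mem_insert_self x t) hvw.symm (h hw hx)

end Joins

theorem card_le_two_of_isCompleteBetween {A X : Finset V} (hG : GH2.Free G)
    (h : G.IsCompleteBetween A X) (hA : ¬ G.IsIndepSet A)
    (hX : ¬ G.IsIndepSet X) : #A ≤ 2 ∧ #X ≤ 2 := by
  constructor <;> by_contra! hcard
  · exact hX (isIndepSet_of_isCompleteBetween hG h hcard hA)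
  · exact hA (isIndepSet_of_isCompleteBetween hG h.symm hcard hX)

theorem card_le_one_of_isCompleteBetween {A X : Finset V} (hG : GH2.Free G)
    (h : G.IsCompleteBetween A X) (hA : ¬ G.CliqueFreeOn A 3) :
    #X ≤ 1 := by
  by_contra! hcard
  exact hA (cliqueFreeOn_three_of_isCompleteBetween hG h (one_lt_card_iff_nontrivial.1 hcard))

/-- A maximal triangle-free `B ⊆ A` works: every vertex of `A \ B` closes a triangle with two
vertices of `B`, and these pairs are disjoint because distinct triangles in `A` do not meet. -/
theorem PawFreeOn.exists_cliqueFreeOn_three {A : Finset V} (hA : PawFreeOn G A) :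
    ∃ B ⊆ A, G.CliqueFreeOn (B : Set V) 3 ∧ 2 * #A ≤ 3 * #B := by
  classical
  obtain ⟨B, -, hB⟩ := (A.powerset.filter fun B : Finset V ↦ G.CliqueFreeOn (B : Set V) 3)
    |>.exists_le_maximal (a := ∅) (by simp [CliqueFreeOn, isNClique_iff])
  simp only [maximal_iff, mem_filter, mem_powerset] at hB
  obtain ⟨⟨hBA, hBfree⟩, hBmax⟩ := hB
  refine ⟨B, hBA, hBfree, ?_⟩
  have exists_triangle (v : V) (hv : v ∈ A \ B) :
      ∃ t : Finset V, t ⊆ insert v B ∧ G.IsNClique 3 t ∧ v ∈ t := by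
    rw [mem_sdiff] at hv
    by_contra! h
    refine hv.2 <| (hBmax ⟨insert_subset hv.1 hBA, fun t ht htc ↦ ?_⟩ (subset_insert v B)) ▸
      mem_insert_self v B
    have htv := h t (by simpa using coe_subset.1 ht) htc
    exact hBfree (coe_subset.2 <| (subset_insert_iff_of_notMem htv).1 (coe_subset.1 ht)) htc
  choose! t ht htc hvt using exists_triangle
  have ht_eq {v w x : V} (hv : v ∈ A \ B) (hw : w ∈ A \ B) (hx : x ∈ (t v).erase v)
      (hx' : x ∈ (t w).erase w) : v = w := by
    rw [mem_erase] at hx hx'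
    rw [mem_sdiff] at hw
    have htA : (t v : Set V) ⊆ A :=
      coe_subset.2 ((ht v hv).trans (insert_subset (mem_sdiff.1 hv).1 hBA))
    have hwt : w ∈ t v := hA htA (htc v hv) hx.2 hw.1 <|
      (htc w (mem_sdiff.2 hw)).isClique hx'.2 (hvt w (mem_sdiff.2 hw)) hx'.1
    exact ((mem_insert.1 (ht v hv hwt)).resolve_right hw.2).symm
  have hcard : #(A \ B) * 2 ≤ #B := by
    rw [← sum_const_nat (m := 2) (f := fun v ↦ #((t v).erase v)) fun v hv ↦ by
        rw [card_erase_of_mem (hvt v hv), (htc v hv).card_eq],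
      ← card_biUnion fun v hv w hw hvw ↦ disjoint_left.2 fun x hx hx' ↦ hvw (ht_eq hv hw hx hx')]
    refine card_le_card <| biUnion_subset.2 fun v hv x hx ↦ ?_
    rw [mem_erase] at hx
    exact (mem_insert.1 (ht v hv hx.2)).resolve_left hx.1
  have := card_sdiff_add_card_eq_card hBA
  omega

end Graphs

/-! ### Ramsey bounds for two graphs -/

section Ramsey

variable {V : Type*} {G G' : SimpleGraph V}

theorem cliqueFree_induce_neighborSet {n : ℕ} (hG : G.CliqueFree (n + 1)) (v : V) :
    (G.induce (G.neighborSet v)).CliqueFree n := by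
  rw [cliqueFree_induce_iff, ← Set.univ_inter (G.neighborSet v)]
  exact CliqueFreeOn.of_succ G ((cliqueFreeOn_univ G).2 hG) (Set.mem_univ v)

theorem cliqueFreeOn_compl_of_isNClique (hcover : ∀ x y, x ≠ y → G.Adj x y ∨ G'.Adj x y)
    (hG : GH2.Free G) (hG' : GH2.Free G') {Q : Finset V} (hQ : G.IsNClique 4 Q) :
    G'.CliqueFreeOn (Q : Set V)ᶜ 3 := by
  classical
  obtain ⟨m, hm⟩ := exists_forall_not_adj_of_isNClique hG hQ
  intro t htQ ht
  obtain ⟨u, v, w, huv, huw, hvw, rfl⟩ := is3Clique_iff.1 ht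
  have adj {z q : V} (hz : z ∉ Q) (hq : q ∈ Q) (hqm : q ≠ m z) : G'.Adj z q :=
    (hcover z q (ne_of_mem_of_not_mem hq hz).symm).resolve_left (hm z hz q hq hqm)
  simp only [coe_insert, coe_singleton, Set.insert_subset_iff, Set.singleton_subset_iff,
    Set.mem_compl_iff, mem_coe] at htQ
  obtain ⟨hu, hv, hw⟩ := htQ
  obtain ⟨q, hq, hqm⟩ := exists_mem_notMem_of_card_lt_card (s := {m u, m v, m w}) (t := Q)
    (card_le_three.trans_lt (by simp [hQ.card_eq]))
  obtain ⟨p, hp, hpm⟩ := exists_mem_notMem_of_card_lt_card (s := {m u, m v, q}) (t := Q)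
    (card_le_three.trans_lt (by simp [hQ.card_eq]))
  simp only [mem_insert, mem_singleton, not_or] at hqm hpm
  exact hG' <| GH2_isContained (adj hw hq hqm.2.2) huw.symm hvw.symm (adj hu hq hqm.1).symm
    (adj hv hq hqm.2.1).symm huv (adj hu hp hpm.1).symm (adj hv hp hpm.2.1).symm
    (ne_of_mem_of_not_mem hp hw) hpm.2.2

variable [Fintype V]

theorem card_le_degree_add_degree_add_one [DecidableRel G.Adj] [DecidableRel G'.Adj]
    (hcover : ∀ x y, x ≠ y → G.Adj x y ∨ G'.Adj x y) (v : V) :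
    Fintype.card V ≤ G.degree v + G'.degree v + 1 := by
  classical
  have huniv : (univ : Finset V) ⊆ insert v (G.neighborFinset v ∪ G'.neighborFinset v) := by
    intro x _
    by_cases hxv : x = v
    · simp [hxv]
    · simpa [hxv] using hcover v x (Ne.symm hxv)
  calc Fintype.card V ≤ #(G.neighborFinset v ∪ G'.neighborFinset v) + 1 :=
        (card_le_card huniv).trans (card_insert_le _ _)
    _ ≤ G.degree v + G'.degree v + 1 := by gcongr; exact card_union_le _ _

theorem card_le_of_degree_le [DecidableRel G.Adj] [DecidableRel G'.Adj]
    (hcover : ∀ x y, x ≠ y → G.Adj x y ∨ G'.Adj x y) {a b : ℕ} (hG : ∀ v, G.degree v ≤ a)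
    (hG' : ∀ v, G'.degree v ≤ b) : Fintype.card V ≤ a + b + 1 := by
  rcases isEmpty_or_nonempty V with _ | ⟨⟨v⟩⟩
  · simp
  · have := card_le_degree_add_degree_add_one hcover v
    have := hG v
    have := hG' v
    omega

/-- Equality in `card_le_of_degree_le` makes `G` regular of odd degree on an odd number of
vertices, against the handshake lemma. -/
theorem card_le_of_degree_le_of_odd [DecidableRel G.Adj] [DecidableRel G'.Adj]
    (hcover : ∀ x y, x ≠ y → G.Adj x y ∨ G'.Adj x y) {a b : ℕ} (hG : ∀ v, G.degree v ≤ a)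
    (hG' : ∀ v, G'.degree v ≤ b) (ha : Odd a) (hb : Odd b) : Fintype.card V ≤ a + b := by
  classical
  refine Nat.le_of_lt_succ <| (card_le_of_degree_le hcover hG hG').lt_of_ne fun hcard ↦ ?_
  have hdeg (v : V) : G.degree v = a := by
    have := card_le_degree_add_degree_add_one hcover v
    have := hG v
    have := hG' v
    omega
  have handshake := G.sum_degrees_eq_twice_card_edges
  simp only [hdeg, sum_const, card_univ, hcard, smul_eq_mul] at handshake
  have : Odd ((a + b + 1) * a) := ((ha.add_odd hb).add_one).mul ha
  exact Nat.not_even_iff_odd.2 this (handshake ▸ even_two_mul _)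

theorem degree_lt_of_cliqueFree [DecidableRel G.Adj] {n : ℕ}
    (hcover : ∀ x y, x ≠ y → G.Adj x y ∨ G'.Adj x y) (hG : G.CliqueFree 3)
    (hG' : G'.CliqueFree n) (v : V) : G.degree v < n := by
  by_contra! h
  have hclique : G'.IsClique (G.neighborFinset v) := fun x hx y hy hxy ↦
    (hcover x y hxy).resolve_left <|
      isIndepSet_neighborSet_of_triangleFree G hG v (by simpa using hx) (by simpa using hy) hxy
  obtain ⟨S, hS, hcard⟩ := exists_subset_card_eq h
  exact hG' S ⟨hclique.subset (coe_subset.2 hS), hcard⟩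

theorem card_le_five_of_cliqueFree_three (hcover : ∀ x y, x ≠ y → G.Adj x y ∨ G'.Adj x y)
    (hG : G.CliqueFree 3) (hG' : G'.CliqueFree 3) : Fintype.card V ≤ 5 := by
  classical
  exact card_le_of_degree_le hcover
    (fun v ↦ Nat.le_of_lt_succ (degree_lt_of_cliqueFree hcover hG hG' v))
    (fun v ↦ Nat.le_of_lt_succ (degree_lt_of_cliqueFree (fun x y h ↦ (hcover x y h).symm) hG' hG v))

theorem card_le_eight_of_cliqueFree_four (hcover : ∀ x y, x ≠ y → G.Adj x y ∨ G'.Adj x y)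
    (hG : G.CliqueFree 3) (hG' : G'.CliqueFree 4) : Fintype.card V ≤ 8 := by
  classical
  refine card_le_of_degree_le_of_odd (a := 3) (b := 5) hcover
    (fun v ↦ Nat.le_of_lt_succ (degree_lt_of_cliqueFree hcover hG hG' v)) (fun v ↦ ?_)
    (by decide) (by decide)
  rw [← card_neighborSet_eq_degree]
  exact card_le_five_of_cliqueFree_three (fun x y hxy ↦ hcover x y (Subtype.coe_ne_coe.2 hxy))
    (hG.comap (Embedding.induce _).isContained) (cliqueFree_induce_neighborSet hG' v)

/-- Here `G'` contains a `K₄`. Every vertex outside it has at most one `G'`-neighbour in it, so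
any two outside vertices have a common `G`-neighbour in it; as `G` is triangle-free, the outside is
a `G'`-clique. -/
theorem card_le_eight_of_GH2_free (hcover : ∀ x y, x ≠ y → G.Adj x y ∨ G'.Adj x y)
    (hG : G.CliqueFree 3) (hG' : GH2.Free G') : Fintype.card V ≤ 8 := by
  classical
  by_cases h4 : G'.CliqueFree 4
  · exact card_le_eight_of_cliqueFree_four hcover hG h4
  obtain ⟨Q, hQ⟩ : ∃ Q, G'.IsNClique 4 Q := by simpa [CliqueFree] using h4
  obtain ⟨m, hm⟩ := exists_forall_not_adj_of_isNClique hG' hQ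
  have adj {u q : V} (hu : u ∉ Q) (hq : q ∈ Q) (hqm : q ≠ m u) : G.Adj u q :=
    (hcover u q (ne_of_mem_of_not_mem hq hu).symm).resolve_right (hm u hu q hq hqm)
  have hclique : G'.IsClique (Qᶜ : Finset V) := by
    intro u hu v hv huv
    simp only [mem_coe, mem_compl] at hu hv
    obtain ⟨q, hq, hqm⟩ := exists_mem_notMem_of_card_lt_card (s := {m u, m v}) (t := Q)
      (card_le_two.trans_lt (by simp [hQ.card_eq]))
    simp only [mem_insert, mem_singleton, not_or] at hqm
    refine (hcover u v huv).resolve_left fun huvG ↦ hG {u, v, q} ?_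
    exact is3Clique_triple_iff.2 ⟨huvG, adj hu hq hqm.1, adj hv hq hqm.2⟩
  have := card_le_four_of_isClique hG' hclique
  have := card_add_card_compl Q
  have := hQ.card_eq
  omega

theorem degree_le_eight_of_cliqueFree_four [DecidableRel G.Adj]
    (hcover : ∀ x y, x ≠ y → G.Adj x y ∨ G'.Adj x y) (hG' : GH2.Free G') (hG : G.CliqueFree 4)
    (v : V) : G.degree v ≤ 8 := by
  rw [← card_neighborSet_eq_degree]
  exact card_le_eight_of_GH2_free (fun x y hxy ↦ hcover x y (Subtype.coe_ne_coe.2 hxy))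
    (cliqueFree_induce_neighborSet hG v)
    (free_of_isContained (Embedding.induce _).isContained hG')

theorem card_le_twelve_of_not_cliqueFree_four (hcover : ∀ x y, x ≠ y → G.Adj x y ∨ G'.Adj x y)
    (hG : GH2.Free G) (hG' : GH2.Free G') (h4 : ¬ G.CliqueFree 4) : Fintype.card V ≤ 12 := by
  classical
  obtain ⟨Q, hQ⟩ : ∃ Q, G.IsNClique 4 Q := by simpa [CliqueFree] using h4
  have houtside : Fintype.card ((Q : Set V)ᶜ : Set V) ≤ 8 :=
    card_le_eight_of_GH2_free (fun x y hxy ↦ (hcover x y (Subtype.coe_ne_coe.2 hxy)).symm)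
      ((cliqueFree_induce_iff ..).2 (cliqueFreeOn_compl_of_isNClique hcover hG hG' hQ))
      (free_of_isContained (Embedding.induce _).isContained hG)
  rw [Fintype.card_compl_set, (Q : Set V).fintypeCard_eq_ncard, Set.ncard_coe_finset,
    hQ.card_eq] at houtside
  omega

theorem card_le_seventeen_of_GH2_free (hcover : ∀ x y, x ≠ y → G.Adj x y ∨ G'.Adj x y)
    (hG : GH2.Free G) (hG' : GH2.Free G') : Fintype.card V ≤ 17 := by
  classical
  by_cases h4 : G.CliqueFree 4 ∧ G'.CliqueFree 4
  · exact card_le_of_degree_le (a := 8) (b := 8) hcover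
      (degree_le_eight_of_cliqueFree_four hcover hG' h4.1)
      (degree_le_eight_of_cliqueFree_four (fun x y h ↦ (hcover x y h).symm) hG h4.2)
  rcases not_and_or.1 h4 with h | h
  · exact (card_le_twelve_of_not_cliqueFree_four hcover hG hG' h).trans (by norm_num)
  · exact (card_le_twelve_of_not_cliqueFree_four (fun x y h ↦ (hcover x y h).symm) hG' hG h).trans
      (by norm_num)

end Ramsey

/-! ### Gallai colourings and Gallai's theorem -/

/-- An edge colouring of the complete graph on `V` with colours in `C` and without rainbow
triangles, as a symmetric function of two vertices; its values `color x x` are irrelevant. -/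
structure GallaiColoring (V C : Type*) where
  color : V → V → C
  color_comm : ∀ x y, color x y = color y x
  no_rainbow : ∀ ⦃x y z⦄, x ≠ y → x ≠ z → y ≠ z →
    color x y = color x z ∨ color x y = color y z ∨ color x z = color y z

namespace GallaiColoring

variable {V W C : Type*} (c : GallaiColoring V C)

/-- The graph of the edges of colour `i`. -/
def graph (i : C) : SimpleGraph V where
  Adj x y := x ≠ y ∧ c.color x y = i
  symm := ⟨fun x y h ↦ ⟨h.1.symm, c.color_comm x y ▸ h.2⟩⟩
  loopless := ⟨fun _ h ↦ h.1 rfl⟩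

/-- The colouring of `W` pulled back from `V` along an injection. -/
def comap (f : W ↪ V) : GallaiColoring W C where
  color x y := c.color (f x) (f y)
  color_comm _ _ := c.color_comm _ _
  no_rainbow _ _ _ hxy hxz hyz :=
    c.no_rainbow (f.injective.ne hxy) (f.injective.ne hxz) (f.injective.ne hyz)

theorem graph_comap (f : W ↪ V) (i : C) : (c.comap f).graph i = (c.graph i).comap f := by
  ext x y
  simp [graph, comap]

variable {c} {i j l : C}

section Homogeneous

variable (c) in
/-- A partition of the vertices, given as an equivalence relation, such that all edges between two
of its classes have the same colour: the notion underlying Gallai partitions. -/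
def IsHomogeneous (s : Setoid V) : Prop :=
  ∀ ⦃x x' y⦄, s x x' → ¬ s x y → c.color x y = c.color x' y

theorem isHomogeneous_reachableSetoid (i : C) :
    c.IsHomogeneous (c.graph i).reachableSetoid := by
  rintro x x' y ⟨p⟩ hxy
  induction p with
  | nil => rfl
  | @cons x z x' hxz _ ih =>
    have hzy : ¬ (c.graph i).Reachable z y := fun h ↦ hxy (hxz.reachable.trans h)
    rw [← ih hzy]
    have hxy' : x ≠ y := fun h ↦ hxy (h ▸ .refl x)
    have hzy' : z ≠ y := fun h ↦ hzy (h ▸ .refl z)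
    rcases c.no_rainbow hxz.1 hxy' hzy' with h | h | h
    · have hadj : (c.graph i).Adj x y := ⟨hxy', h.symm.trans hxz.2⟩
      exact absurd hadj.reachable hxy
    · have hadj : (c.graph i).Adj z y := ⟨hzy', h.symm.trans hxz.2⟩
      exact absurd hadj.reachable hzy
    · exact h

variable {s : Setoid V}

/-- The colouring of the classes of `s` by the colours between representatives. -/
noncomputable def quotient (c : GallaiColoring V C) (s : Setoid V) :
    GallaiColoring (Quotient s) C :=
  c.comap ⟨Quotient.out, Quotient.out_injective⟩

theorem IsHomogeneous.color_quotient (hs : c.IsHomogeneous s) {x y : V} (hxy : ¬ s x y) :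
    (c.quotient s).color ⟦x⟧ ⟦y⟧ = c.color x y := by
  have hx : s (⟦x⟧ : Quotient s).out x := Quotient.mk_out x
  have hy : s (⟦y⟧ : Quotient s).out y := Quotient.mk_out y
  have hxy' : ¬ s (⟦x⟧ : Quotient s).out (⟦y⟧ : Quotient s).out := fun h ↦
    hxy (s.trans' (s.symm' hx) (s.trans' h hy))
  calc c.color (⟦x⟧ : Quotient s).out (⟦y⟧ : Quotient s).out
      = c.color x (⟦y⟧ : Quotient s).out := hs hx hxy'
    _ = c.color (⟦y⟧ : Quotient s).out x := c.color_comm _ _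
    _ = c.color y x := hs hy fun h ↦ hxy (s.trans' (s.symm' h) hy)
    _ = c.color x y := c.color_comm _ _

theorem le_comap_mk (t : Setoid (Quotient s)) : s ≤ t.comap (Quotient.mk s) := by
  intro x y hxy
  rw [Setoid.comap_rel, show (⟦x⟧ : Quotient s) = ⟦y⟧ from Quotient.sound hxy]

theorem IsHomogeneous.comap_mk (hs : c.IsHomogeneous s) {t : Setoid (Quotient s)}
    (ht : (c.quotient s).IsHomogeneous t) : c.IsHomogeneous (t.comap (Quotient.mk s)) := by
  intro x x' y hxx' hxy
  have hx'y : ¬ t.comap (Quotient.mk s) x' y := fun h ↦ hxy (Setoid.trans' _ hxx' h)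
  rw [← hs.color_quotient fun h ↦ hxy (le_comap_mk t h),
    ← hs.color_quotient fun h ↦ hx'y (le_comap_mk t h), ht hxx' hxy]

end Homogeneous

section Connected

theorem exists_reachable_color_eq (hi : (c.graph i).Preconnected) {v : V} (w : {x // x ≠ v}) :
    ∃ w', ((c.comap (.subtype _)).graph i).Reachable w w' ∧ c.color v w' = i := by
  obtain ⟨p⟩ := hi w v
  obtain ⟨d, -, ⟨hdv, hd⟩, hd'⟩ := p.exists_boundary_dart
    {x | ∃ hx : x ≠ v, ((c.comap (.subtype _)).graph i).Reachable w ⟨x, hx⟩}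
    ⟨w.2, .refl w⟩ fun h ↦ h.1 rfl
  refine ⟨⟨d.fst, hdv⟩, hd, ?_⟩
  suffices h : d.snd = v from (c.color_comm _ _).trans (h ▸ d.adj.2)
  by_contra hdv'
  refine hd' ⟨hdv', hd.trans (Adj.reachable ?_)⟩
  rw [graph_comap]
  exact d.adj

/-- A component of colour `i` on the vertices other than `v` sends to every other component the
colours different from `i` by which it is joined to `v`. Hence a disconnected `i` leaves room for
only one such colour. -/
theorem preconnected_comap_ne (hij : i ≠ j) (hil : i ≠ l) (hjl : j ≠ l)
    (hi : (c.graph i).Preconnected) {v w₁ w₂ : V} (hw₁ : (c.graph j).Adj v w₁)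
    (hw₂ : (c.graph l).Adj v w₂) :
    ((c.comap (.subtype (· ≠ v))).graph i).Preconnected := by
  set c' := c.comap (.subtype (· ≠ v))
  have hs := c'.isHomogeneous_reachableSetoid i
  have color_eq {w y : {x // x ≠ v}} (hw : c.color v w ≠ i)
      (hwy : ¬ (c'.graph i).Reachable w y) : c'.color w y = c.color v w := by
    obtain ⟨y', hyy', hy'⟩ := exists_reachable_color_eq hi y
    have hwy' : ¬ (c'.graph i).Reachable w y' := fun h ↦ hwy (h.trans hyy'.symm)
    have hne : w ≠ y' := fun h ↦ hwy' (h ▸ .refl w)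
    have hcolor : c'.color w y' ≠ i := fun h ↦
      hwy' (SimpleGraph.Adj.reachable (G := c'.graph i) ⟨hne, h⟩)
    have hyw : c'.color w y = c'.color w y' := by
      rw [c'.color_comm w y, c'.color_comm w y']
      exact hs hyy' fun h ↦ hwy h.symm
    rcases c.no_rainbow w.2.symm y'.2.symm (Subtype.coe_ne_coe.2 hne) with h | h | h
    · exact absurd (h.trans hy') hw
    · exact hyw.trans h.symm
    · exact absurd (h.symm.trans hy') hcolor
  let u₁ : {x // x ≠ v} := ⟨w₁, hw₁.1.symm⟩
  let u₂ : {x // x ≠ v} := ⟨w₂, hw₂.1.symm⟩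
  have hu₁ {y} (h : ¬ (c'.graph i).Reachable u₁ y) : c'.color u₁ y = j :=
    (color_eq (hw₁.2.trans_ne hij.symm) h).trans hw₁.2
  have hu₂ {y} (h : ¬ (c'.graph i).Reachable u₂ y) : c'.color u₂ y = l :=
    (color_eq (hw₂.2.trans_ne hil.symm) h).trans hw₂.2
  suffices h : ∀ y, (c'.graph i).Reachable u₁ y from fun y z ↦ (h y).symm.trans (h z)
  intro y
  by_contra hy
  by_cases h : (c'.graph i).Reachable u₁ u₂
  · exact hjl <| calc
      j = c'.color u₁ y := (hu₁ hy).symm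
      _ = c'.color u₂ y := hs h hy
      _ = l := hu₂ fun h' ↦ hy (h.trans h')
  · exact hjl <| (hu₁ h).symm.trans <| (c'.color_comm _ _).trans (hu₂ fun h' ↦ h h'.symm)

theorem not_preconnected_of_three_colors [Finite V] [Nontrivial V] (hij : i ≠ j) (hil : i ≠ l)
    (hjl : j ≠ l) (hi : (c.graph i).Preconnected) (hj : (c.graph j).Preconnected) :
    ¬ (c.graph l).Preconnected := by
  intro hl
  induction hn : Nat.card V using Nat.strong_induction_on generalizing V with
  | _ n ih =>
    subst hn
    obtain ⟨v⟩ := ‹Nontrivial V›.to_nonempty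
    obtain ⟨x, hx⟩ := hi.exists_adj_of_nontrivial v
    obtain ⟨y, hy⟩ := hj.exists_adj_of_nontrivial v
    obtain ⟨z, hz⟩ := hl.exists_adj_of_nontrivial v
    have : Nontrivial {w // w ≠ v} := by
      refine ⟨⟨x, hx.1.symm⟩, ⟨y, hy.1.symm⟩, fun hxy ↦ hij ?_⟩
      rw [← hx.2, ← hy.2, Subtype.mk.inj hxy]
    exact ih _ (Finite.card_subtype_lt (not_not.2 rfl)) (preconnected_comap_ne hij hil hjl hi hy hz)
      (preconnected_comap_ne hij.symm hjl hil hj hx hz)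
      (preconnected_comap_ne hil.symm hjl.symm hij hl hx hy) rfl

end Connected

variable (c) in
theorem exists_two_colors [Finite V] [Nontrivial V]
    (h : ∀ i x y, (c.graph i).Adj x y → (c.graph i).Preconnected) :
    ∃ r b, ∀ x y, x ≠ y → c.color x y = r ∨ c.color x y = b := by
  obtain ⟨x₀, y₀, hxy₀⟩ := exists_pair_ne V
  by_cases hmono : ∀ x y, x ≠ y → c.color x y = c.color x₀ y₀
  · exact ⟨_, c.color x₀ y₀, fun x y hxy ↦ .inl (hmono x y hxy)⟩
  push Not at hmono
  obtain ⟨x₁, y₁, hxy₁, hne⟩ := hmono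
  refine ⟨c.color x₀ y₀, c.color x₁ y₁, fun x y hxy ↦ ?_⟩
  by_contra! hthird
  exact not_preconnected_of_three_colors hne.symm hthird.1.symm hthird.2.symm
    (h _ x₀ y₀ ⟨hxy₀, rfl⟩) (h _ x₁ y₁ ⟨hxy₁, rfl⟩) (h _ x y ⟨hxy, rfl⟩)

variable (c) in
/-- Gallai's theorem. If some colour is present but disconnected, its components form a homogeneous
partition, and one passes to the smaller complete graph on the classes; otherwise at most two
colours are present. -/
theorem exists_isHomogeneous_two_colors [Finite V] [Nontrivial V] :
    ∃ s : Setoid V, s ≠ ⊤ ∧ c.IsHomogeneous s ∧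
      ∃ r b, ∀ x y, ¬ s x y → c.color x y = r ∨ c.color x y = b := by
  induction hn : Nat.card V using Nat.strong_induction_on generalizing V with
  | _ n ih =>
  by_cases h : ∀ i x y, (c.graph i).Adj x y → (c.graph i).Preconnected
  · obtain ⟨r, b, hrb⟩ := c.exists_two_colors h
    obtain ⟨x, y, hxy⟩ := exists_pair_ne V
    refine ⟨⊥, fun h ↦ hxy (Setoid.eq_top_iff.1 h x y), fun x x' y hxx' _ ↦ ?_, r, b, hrb⟩
    rw [show x = x' from hxx']
  push Not at h
  obtain ⟨i, x, y, hxy, hi⟩ := h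
  have hs := c.isHomogeneous_reachableSetoid i
  set s := (c.graph i).reachableSetoid
  have : Nontrivial (Quotient s) := not_subsingleton_iff_nontrivial.1 <|
    Quotient.subsingleton_iff.not.2 fun h ↦ hi fun x y ↦ Setoid.eq_top_iff.1 h x y
  have hcard : Nat.card (Quotient s) < n := by
    classical
    have := Fintype.ofFinite V
    rw [← hn, Nat.card_eq_fintype_card, Nat.card_eq_fintype_card]
    exact Fintype.card_lt_of_surjective_not_injective _ Quotient.mk_surjective fun hinj ↦
      hxy.1 (hinj (Quotient.sound hxy.reachable))
  obtain ⟨t, ht, hct, r, b, hrb⟩ := ih _ hcard (c.quotient s) rfl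
  refine ⟨t.comap (Quotient.mk s), fun htop ↦ ht ?_, hs.comap_mk hct, r, b, fun x y hxy ↦ ?_⟩
  · exact Setoid.eq_top_iff.2 <| Quotient.ind₂ fun x y ↦ Setoid.eq_top_iff.1 htop x y
  · rw [← hs.color_quotient fun h ↦ hxy (le_comap_mk t h)]
    exact hrb _ _ hxy

end GallaiColoring

/-! ### The numerical bounds -/

section Weight

/-- The largest order of a Gallai colouring with `n` colours and no monochromatic triangle. -/
def triangleBound : ℕ → ℕ
  | 0 => 1
  | 1 => 2
  | n + 2 => 5 * triangleBound n

/-- The factor contributed to the upper bound by `n` colours without a copy of `GH2`. It is exact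
for even `n`; the value `33 / 8` at `1` is chosen so that consecutive ratios, `33 / 8` and
`136 / 33`, are both large enough for the induction. -/
def hBound : ℕ → ℚ
  | 0 => 1
  | 1 => 33 / 8
  | n + 2 => 17 * hBound n

/-- The upper bound for the order of a Gallai colouring with `a` triangle-free colours and `b`
colours without a copy of `GH2`. -/
def weight (a b : ℕ) : ℚ := triangleBound a * hBound b

theorem one_le_triangleBound (n : ℕ) : 1 ≤ triangleBound n := by
  induction n using triangleBound.induct <;> simp only [triangleBound] <;> omega

theorem two_mul_triangleBound_le (n : ℕ) : 2 * triangleBound n ≤ triangleBound (n + 1) := by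
  induction n using triangleBound.induct <;> simp only [triangleBound] at * <;> omega

theorem two_mul_triangleBound_succ_le (n : ℕ) :
    2 * triangleBound (n + 1) ≤ 5 * triangleBound n := by
  induction n using triangleBound.induct <;> simp only [triangleBound] at * <;> omega

theorem triangleBound_two_mul_add_one (n : ℕ) : triangleBound (2 * n + 1) = 2 * 5 ^ n := by
  induction n with
  | zero => rfl
  | succ n ih => rw [show 2 * (n + 1) + 1 = 2 * n + 1 + 2 by ring, triangleBound, ih]; ring

theorem one_le_hBound (n : ℕ) : 1 ≤ hBound n := by
  induction n using hBound.induct <;> simp only [hBound] <;> linarith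

theorem hBound_two_mul (n : ℕ) : hBound (2 * n) = 17 ^ n := by
  induction n with
  | zero => rfl
  | succ n ih => rw [mul_add, mul_one, hBound, ih]; ring

theorem hBound_mul_le_succ (n : ℕ) : 136 / 33 * hBound n ≤ hBound (n + 1) := by
  induction n using hBound.induct <;> simp only [hBound] at * <;> linarith

theorem hBound_succ_le_mul (n : ℕ) : hBound (n + 1) ≤ 33 / 8 * hBound n := by
  induction n using hBound.induct <;> simp only [hBound] at * <;> linarith

variable (a b : ℕ)

theorem one_le_weight : 1 ≤ weight a b :=
  one_le_mul_of_one_le_of_one_le (mod_cast one_le_triangleBound a) (one_le_hBound b)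

theorem two_mul_weight_le_succ_left : 2 * weight a b ≤ weight (a + 1) b := by
  have : (2 * triangleBound a : ℚ) ≤ triangleBound (a + 1) := mod_cast two_mul_triangleBound_le a
  unfold weight
  nlinarith [one_le_hBound b]

theorem weight_succ_left_le_mul : weight (a + 1) b ≤ 5 / 2 * weight a b := by
  have : (2 * triangleBound (a + 1) : ℚ) ≤ 5 * triangleBound a :=
    mod_cast two_mul_triangleBound_succ_le a
  unfold weight
  nlinarith [one_le_hBound b]

theorem weight_add_two_left : weight (a + 2) b = 5 * weight a b := by
  simp only [weight, triangleBound]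
  push_cast
  ring

theorem mul_weight_le_succ_right : 136 / 33 * weight a b ≤ weight a (b + 1) := by
  unfold weight
  rw [mul_left_comm]
  gcongr
  exact hBound_mul_le_succ b

theorem weight_succ_right_le_mul : weight a (b + 1) ≤ 33 / 8 * weight a b := by
  unfold weight
  rw [mul_left_comm]
  gcongr
  exact hBound_succ_le_mul b

theorem weight_add_two_right : weight a (b + 2) = 17 * weight a b := by
  simp only [weight, hBound]
  ring

theorem four_le_weight_succ_right : 4 ≤ weight a (b + 1) := by
  linarith [one_le_weight a b, mul_weight_le_succ_right a b]

variable {a b} in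
/-- Only for `(a, b) = (1, 0)` is integrality needed. -/
theorem add_one_le_weight_succ_right {m : ℕ} (hm : (2 * m : ℚ) ≤ 3 * weight (a + 1) b) :
    (m + 1 : ℚ) ≤ weight a (b + 1) := by
  match a, b with
  | 0, 0 => norm_num [weight, triangleBound, hBound] at hm ⊢; linarith
  | 1, 0 =>
    norm_num [weight, triangleBound, hBound] at hm ⊢
    have : m ≤ 7 := by
      have : 2 * m ≤ 15 := mod_cast hm
      omega
    have : (m : ℚ) ≤ 7 := mod_cast this
    linarith
  | a + 2, 0 =>
    linarith [one_le_weight a 0, weight_add_two_left a 0, weight_succ_left_le_mul (a + 2) 0,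
      mul_weight_le_succ_right (a + 2) 0]
  | a, b + 1 =>
    linarith [four_le_weight_succ_right a b, weight_succ_left_le_mul a (b + 1),
      mul_weight_le_succ_right a (b + 1)]

end Weight

/-! ### The upper bound -/

namespace GallaiColoring

section Admissible

variable {V W U C : Type*} {c : GallaiColoring V C} {H : SimpleGraph U} {T B : Finset C} {r : C}

variable (c) in
/-- The colouring `c` uses only colours of `T` and `B`, without a triangle in the colours of `T`
and without a copy of `H` in the colours of `B`. -/
structure Admissible (H : SimpleGraph U) (T B : Finset C) : Prop where
  disjoint : Disjoint T B
  color_mem : ∀ ⦃x y⦄, x ≠ y → c.color x y ∈ T ∨ c.color x y ∈ B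
  cliqueFree : ∀ i ∈ T, (c.graph i).CliqueFree 3
  free : ∀ i ∈ B, H.Free (c.graph i)

theorem Admissible.mono {U' : Type*} {H' : SimpleGraph U'} (hH : H ⊑ H')
    (hc : c.Admissible H T B) : c.Admissible H' T B :=
  { hc with free := fun i hi h ↦ hc.free i hi (hH.trans h) }

theorem Admissible.comap (hc : c.Admissible H T B) (f : W ↪ V) : (c.comap f).Admissible H T B where
  disjoint := hc.disjoint
  color_mem _ _ hxy := hc.color_mem (f.injective.ne hxy)
  cliqueFree i hi := by
    rw [graph_comap]
    exact (hc.cliqueFree i hi).comap (SimpleGraph.Embedding.comap f _).isContained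
  free i hi := by
    rw [graph_comap]
    exact free_of_isContained (SimpleGraph.Embedding.comap f _).isContained (hc.free i hi)

variable (c) in
/-- The restriction of `c` to `A`. -/
def induce (A : Finset V) : GallaiColoring A C := c.comap (.subtype (· ∈ A))

variable {A : Finset V} {x y : A}

theorem Admissible.induce_anti {A' : Finset V} (hA : A' ⊆ A)
    (hc : (c.induce A).Admissible H T B) : (c.induce A').Admissible H T B :=
  hc.comap (Subtype.impEmbedding _ _ fun _ h ↦ hA h)

theorem color_induce_ne (hA : (c.graph r).IsIndepSet A) (hxy : x ≠ y) :
    (c.induce A).color x y ≠ r :=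
  fun h ↦ hA x.2 y.2 (Subtype.coe_ne_coe.2 hxy) ⟨Subtype.coe_ne_coe.2 hxy, h⟩

variable [DecidableEq C]

theorem Admissible.of_insert_left (hc : (c.induce A).Admissible H (insert r T) B)
    (hA : (c.graph r).IsIndepSet A) : (c.induce A).Admissible H T B where
  disjoint := hc.disjoint.mono_left (subset_insert r T)
  color_mem _ _ hxy :=
    (hc.color_mem hxy).imp_left fun h ↦ mem_of_mem_insert_of_ne h (color_induce_ne hA hxy)
  cliqueFree i hi := hc.cliqueFree i (mem_insert_of_mem hi)
  free := hc.free

theorem Admissible.of_insert_right (hc : (c.induce A).Admissible H T (insert r B))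
    (hA : (c.graph r).IsIndepSet A) : (c.induce A).Admissible H T B where
  disjoint := hc.disjoint.mono_right (subset_insert r B)
  color_mem _ _ hxy :=
    (hc.color_mem hxy).imp_right fun h ↦ mem_of_mem_insert_of_ne h (color_induce_ne hA hxy)
  cliqueFree := hc.cliqueFree
  free i hi := hc.free i (mem_insert_of_mem hi)

theorem Admissible.insert_left (hc : (c.induce A).Admissible H T (insert r B)) (hr : r ∉ B)
    (hA : (c.graph r).CliqueFreeOn A 3) : (c.induce A).Admissible H (insert r T) B where
  disjoint := disjoint_insert_left.2 ⟨hr, hc.disjoint.mono_right (subset_insert r B)⟩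
  color_mem x y hxy := by
    have := hc.color_mem hxy
    rw [mem_insert] at this ⊢
    tauto
  cliqueFree i hi := by
    rcases mem_insert.1 hi with rfl | hi
    · rw [induce, graph_comap]
      exact (cliqueFree_induce_iff ..).2 hA
    · exact hc.cliqueFree i hi
  free i hi := hc.free i (mem_insert_of_mem hi)

end Admissible

section UpperBound

variable {V C : Type*} [Fintype V] {c : GallaiColoring V C} {T B : Finset C}
  {r b : C} {A X Y : Finset V}

variable (c) in
/-- The bound by `weight` holds on all proper subsets of the vertices; the induction hypothesis in
the proof of the upper bound. -/
def BoundedOnProperSubsets : Prop :=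
  ∀ ⦃A : Finset V⦄, A ≠ univ → ∀ ⦃T B : Finset C⦄, (c.induce A).Admissible GH2 T B →
    (#A : ℚ) ≤ weight #T #B

theorem ne_univ_of_isCompleteBetween {G : SimpleGraph V} (h : G.IsCompleteBetween A X)
    (hX : X.Nonempty) : A ≠ univ := by
  rintro rfl
  obtain ⟨x, hx⟩ := hX
  exact G.irrefl (h (mem_coe.2 (mem_univ x)) hx)

variable [DecidableEq C]

namespace BoundedOnProperSubsets

theorem card_le_of_cliqueFreeOn (hind : c.BoundedOnProperSubsets) (hA : A ≠ univ)
    (hc : (c.induce A).Admissible GH2 T (insert r B)) (hr : r ∉ B)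
    (hfree : (c.graph r).CliqueFreeOn A 3) : (#A : ℚ) ≤ weight (#T + 1) #B := by
  rw [← card_insert_of_notMem (disjoint_insert_right.1 hc.disjoint).1]
  exact hind hA (hc.insert_left hr hfree)

theorem two_mul_card_le_of_pawFreeOn (hind : c.BoundedOnProperSubsets) (hA : A ≠ univ)
    (hc : (c.induce A).Admissible GH2 T (insert r B)) (hr : r ∉ B)
    (hpaw : PawFreeOn (c.graph r) A) : (2 * #A : ℚ) ≤ 3 * weight (#T + 1) #B := by
  obtain ⟨A', hA'A, hfree, hcard⟩ := hpaw.exists_cliqueFreeOn_three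
  have hA' : A' ≠ univ := fun h ↦ hA (univ_subset_iff.1 (h ▸ hA'A))
  calc (2 * #A : ℚ) ≤ 3 * #A' := mod_cast hcard
    _ ≤ 3 * weight (#T + 1) #B := by
      gcongr
      exact hind.card_le_of_cliqueFreeOn hA' (hc.induce_anti hA'A) hr hfree

theorem two_mul_card_le_of_cliqueFreeOn (hind : c.BoundedOnProperSubsets) (hA : A ≠ univ)
    (hc : (c.induce A).Admissible GH2 T (insert r (insert b B))) (hr : r ∉ insert b B) (hb : b ∉ B)
    (hAr : (c.graph r).CliqueFreeOn A 3) (hAb : PawFreeOn (c.graph b) A) :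
    (2 * #A : ℚ) ≤ 15 * weight #T #B := by
  have hA_le := hind.two_mul_card_le_of_pawFreeOn hA (hc.insert_left hr hAr) hb hAb
  rw [card_insert_of_notMem (disjoint_insert_right.1 hc.disjoint).1] at hA_le
  linarith [weight_add_two_left #T #B]

theorem four_mul_card_le_of_pawFreeOn (hind : c.BoundedOnProperSubsets) (hA : A ≠ univ)
    (hc : (c.induce A).Admissible GH2 T (insert r (insert b B))) (hr : r ∉ insert b B)
    (hb : b ∉ B) (hpawr : PawFreeOn (c.graph r) A) (hpawb : PawFreeOn (c.graph b) A) :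
    (4 * #A : ℚ) ≤ 45 * weight #T #B := by
  obtain ⟨A', hA'A, hfree, hcard⟩ := hpawr.exists_cliqueFreeOn_three
  have hA' : A' ≠ univ := fun h ↦ hA (univ_subset_iff.1 (h ▸ hA'A))
  have := hind.two_mul_card_le_of_cliqueFreeOn hA' (hc.induce_anti hA'A) hr hb hfree
    (hpawb.anti (coe_subset.2 hA'A))
  have : (2 * #A : ℚ) ≤ 3 * #A' := mod_cast hcard
  linarith

end BoundedOnProperSubsets

section TwoBlocks

theorem card_le_of_two_blocks_left (hind : c.BoundedOnProperSubsets)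
    (hc : c.Admissible GH2 (insert r T) B) (hr : r ∉ T) (hA : A.Nonempty) (hX : X.Nonempty)
    (hcard : Fintype.card V ≤ #A + #X) (h : (c.graph r).IsCompleteBetween A X) :
    (Fintype.card V : ℚ) ≤ weight #(insert r T) #B := by
  have hfree := hc.cliqueFree r (mem_insert_self r T)
  have hA_le : (#A : ℚ) ≤ weight #T #B := hind (ne_univ_of_isCompleteBetween h hX) <|
    (hc.comap _).of_insert_left (isIndepSet_of_isCompleteBetween_of_cliqueFree hfree h hX)
  have hX_le : (#X : ℚ) ≤ weight #T #B := hind (ne_univ_of_isCompleteBetween h.symm hA) <|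
    (hc.comap _).of_insert_left (isIndepSet_of_isCompleteBetween_of_cliqueFree hfree h.symm hA)
  rw [card_insert_of_notMem hr]
  have : (Fintype.card V : ℚ) ≤ #A + #X := mod_cast hcard
  linarith [two_mul_weight_le_succ_left #T #B]

theorem card_le_of_two_blocks_card_le_one (hind : c.BoundedOnProperSubsets)
    (hc : c.Admissible GH2 T (insert r B)) (hr : r ∉ B) (hX : #X ≤ 1) (hX' : X.Nonempty)
    (hcard : Fintype.card V ≤ #A + #X) (h : (c.graph r).IsCompleteBetween A X) :
    (Fintype.card V : ℚ) ≤ weight #T (#B + 1) := by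
  have hpaw := pawFreeOn_of_isCompleteBetween (hc.free r (mem_insert_self r B)) h hX'
  have hA_le := hind.two_mul_card_le_of_pawFreeOn (ne_univ_of_isCompleteBetween h hX') (hc.comap _)
    hr hpaw
  calc (Fintype.card V : ℚ) ≤ #A + 1 := mod_cast hcard.trans (by omega)
    _ ≤ weight #T (#B + 1) := add_one_le_weight_succ_right hA_le

theorem card_le_of_two_blocks_isIndepSet (hind : c.BoundedOnProperSubsets)
    (hc : c.Admissible GH2 T (insert r B)) (hr : r ∉ B) (hA : A.Nontrivial) (hX : X.Nonempty)
    (hcard : Fintype.card V ≤ #A + #X) (h : (c.graph r).IsCompleteBetween A X)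
    (hAI : (c.graph r).IsIndepSet A) :
    (Fintype.card V : ℚ) ≤ weight #T (#B + 1) := by
  have hA_le : (#A : ℚ) ≤ weight #T #B :=
    hind (ne_univ_of_isCompleteBetween h hX) ((hc.comap _).of_insert_right hAI)
  have hX_le := hind.card_le_of_cliqueFreeOn (ne_univ_of_isCompleteBetween h.symm hA.nonempty)
    (hc.comap _) hr <|
    cliqueFreeOn_three_of_isCompleteBetween (hc.free r (mem_insert_self r B)) h.symm hA
  have : (Fintype.card V : ℚ) ≤ #A + #X := mod_cast hcard
  linarith [weight_succ_left_le_mul #T #B, mul_weight_le_succ_right #T #B, one_le_weight #T #B]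

theorem card_le_of_two_blocks_right (hind : c.BoundedOnProperSubsets)
    (hc : c.Admissible GH2 T (insert r B)) (hr : r ∉ B) (hA : A.Nonempty) (hX : X.Nonempty)
    (hcard : Fintype.card V ≤ #A + #X) (h : (c.graph r).IsCompleteBetween A X) :
    (Fintype.card V : ℚ) ≤ weight #T #(insert r B) := by
  rw [card_insert_of_notMem hr]
  have hcard' : Fintype.card V ≤ #X + #A := hcard.trans_eq (add_comm _ _)
  rcases le_or_gt #A 1 with hA1 | hA1
  · exact card_le_of_two_blocks_card_le_one hind hc hr hA1 hA hcard' h.symm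
  rcases le_or_gt #X 1 with hX1 | hX1
  · exact card_le_of_two_blocks_card_le_one hind hc hr hX1 hX hcard h
  by_cases hAI : (c.graph r).IsIndepSet A
  · exact card_le_of_two_blocks_isIndepSet hind hc hr (one_lt_card_iff_nontrivial.1 hA1) hX hcard h
      hAI
  by_cases hXI : (c.graph r).IsIndepSet X
  · exact card_le_of_two_blocks_isIndepSet hind hc hr (one_lt_card_iff_nontrivial.1 hX1) hA hcard'
      h.symm hXI
  have := card_le_two_of_isCompleteBetween (hc.free r (mem_insert_self r B)) h hAI hXI
  calc (Fintype.card V : ℚ) ≤ 4 := mod_cast hcard.trans (by omega)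
    _ ≤ weight #T (#B + 1) := four_le_weight_succ_right #T #B

end TwoBlocks

end UpperBound

section Parts

variable {V C : Type*} [Fintype V] {c : GallaiColoring V C} {T B : Finset C} {r b : C}
  {A X Y : Finset V}

omit [Fintype V] in
theorem three_le_card_of_not_isIndepSet (hrb : r ≠ b) (hAr : ¬ (c.graph r).IsIndepSet A)
    (hAb : ¬ (c.graph b).IsIndepSet A) : 3 ≤ #A := by
  classical
  have hA : A.Nontrivial := Set.not_subsingleton_iff.1 fun h ↦ hAr (h.pairwise _)
  by_contra! hcard
  obtain ⟨p, q, -, rfl⟩ := card_eq_two.1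
    (le_antisymm (Nat.lt_succ_iff.1 hcard) (one_lt_card_iff_nontrivial.2 hA))
  simp only [coe_pair, IsIndepSet, Set.pairwise_pair, not_forall, not_and_or, not_not] at hAr hAb
  have adj_of {i : C} (h : (c.graph i).Adj p q ∨ (c.graph i).Adj q p) : (c.graph i).Adj p q :=
    h.elim id Adj.symm
  exact hrb ((adj_of hAr.2).2.symm.trans (adj_of hAb.2).2)

variable (c) in
/-- The view from one class `A` of a Gallai partition with colours `r` and `b`: the other vertices
split into the set `X` joined to `A` in colour `r` and the set `Y` joined to `A` in colour `b`. -/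
structure IsGallaiPart (r b : C) (A X Y : Finset V) : Prop where
  nonempty : A.Nonempty
  nonempty_left : X.Nonempty
  nonempty_right : Y.Nonempty
  left : (c.graph r).IsCompleteBetween A X
  right : (c.graph b).IsCompleteBetween A Y
  card_le : Fintype.card V ≤ #A + #X + #Y

namespace IsGallaiPart

theorem symm (hP : c.IsGallaiPart r b A X Y) : c.IsGallaiPart b r A Y X where
  nonempty := hP.nonempty
  nonempty_left := hP.nonempty_right
  nonempty_right := hP.nonempty_left
  left := hP.right
  right := hP.left
  card_le := hP.card_le.trans_eq (by ring)

theorem ne_univ (hP : c.IsGallaiPart r b A X Y) : A ≠ univ :=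
  ne_univ_of_isCompleteBetween hP.left hP.nonempty_left

theorem left_ne_univ (hP : c.IsGallaiPart r b A X Y) : X ≠ univ :=
  ne_univ_of_isCompleteBetween hP.left.symm hP.nonempty

theorem right_ne_univ (hP : c.IsGallaiPart r b A X Y) : Y ≠ univ :=
  hP.symm.left_ne_univ

theorem cast_card_le (hP : c.IsGallaiPart r b A X Y) : (Fintype.card V : ℚ) ≤ #A + #X + #Y :=
  mod_cast hP.card_le

theorem isIndepSet (hP : c.IsGallaiPart r b A X Y) (hfree : (c.graph r).CliqueFree 3) :
    (c.graph r).IsIndepSet A :=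
  isIndepSet_of_isCompleteBetween_of_cliqueFree hfree hP.left hP.nonempty_left

variable [DecidableEq C]

theorem card_le_of_not_isIndepSet_right (hP : c.IsGallaiPart r b A X Y)
    (hind : c.BoundedOnProperSubsets) (hc : c.Admissible GH2 (insert r T) (insert b B))
    (hr : r ∉ T) (hb : b ∉ B) (hA : ¬ (c.graph b).IsIndepSet A) :
    (Fintype.card V : ℚ) ≤ weight (#T + 1) (#B + 1) := by
  have hfree_r := hc.cliqueFree r (mem_insert_self r T)
  have hfree_b := hc.free b (mem_insert_self b B)
  have hcA := (hc.comap _).of_insert_left (hP.isIndepSet hfree_r)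
  have hX_le : (#X : ℚ) ≤ weight #T (#B + 1) := by
    rw [← card_insert_of_notMem hb]
    exact hind hP.left_ne_univ <| (hc.comap _).of_insert_left <|
      isIndepSet_of_isCompleteBetween_of_cliqueFree hfree_r hP.left.symm hP.nonempty
  have hV := hP.cast_card_le
  have hp := four_le_weight_succ_right #T #B
  have hp' := two_mul_weight_le_succ_left #T (#B + 1)
  have he := mul_weight_le_succ_right (#T + 1) #B
  by_cases hAfree : (c.graph b).CliqueFreeOn A 3
  · by_cases hYI : (c.graph b).IsIndepSet Y
    · have hA_le := hind.card_le_of_cliqueFreeOn hP.ne_univ hcA hb hAfree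
      have hY_le : (#Y : ℚ) ≤ weight (#T + 1) #B := by
        rw [← card_insert_of_notMem hr]
        exact hind hP.right_ne_univ ((hc.comap _).of_insert_right hYI)
      linarith
    · obtain ⟨hA_le, hY_le⟩ := card_le_two_of_isCompleteBetween hfree_b hP.right hA hYI
      have : (#A + #Y : ℚ) ≤ 4 := mod_cast add_le_add hA_le hY_le
      linarith
  · have hA_le := hind.two_mul_card_le_of_pawFreeOn hP.ne_univ hcA hb <|
      pawFreeOn_of_isCompleteBetween hfree_b hP.right hP.nonempty_right
    have hY_le : (#Y : ℚ) ≤ 1 :=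
      mod_cast card_le_one_of_isCompleteBetween hfree_b hP.right hAfree
    linarith [two_mul_weight_le_succ_left #T #B, one_le_weight #T #B]

variable (hP : c.IsGallaiPart r b A X Y) (hind : c.BoundedOnProperSubsets)
  (hc : c.Admissible GH2 T (insert r (insert b B))) (hr : r ∉ insert b B) (hb : b ∉ B)

include hP hind hc hr hb

theorem card_le_of_isIndepSet_right (hAr : ¬ (c.graph r).IsIndepSet A)
    (hAb : (c.graph b).IsIndepSet A) : (Fintype.card V : ℚ) ≤ 17 * weight #T #B := by
  have hrB : r ∉ B := fun h ↦ hr (mem_insert_of_mem h)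
  have hbr : b ∉ insert r B := by simp_all [eq_comm]
  have hfree_r := hc.free r (mem_insert_self r _)
  have hcA := (hc.comap (.subtype (· ∈ A)))
  have hcY := (hc.comap (.subtype (· ∈ Y)))
  rw [insert_comm] at hcA hcY
  have hA : A.Nontrivial := Set.not_subsingleton_iff.1 fun h ↦ hAr (h.pairwise _)
  have hY_le := hind.card_le_of_cliqueFreeOn hP.right_ne_univ hcY hbr <|
    cliqueFreeOn_three_of_isCompleteBetween
      (hc.free b (mem_insert_of_mem (mem_insert_self b B))) hP.right.symm hA
  rw [card_insert_of_notMem hrB] at hY_le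
  have hV := hP.cast_card_le
  have hq := weight_succ_right_le_mul (#T + 1) #B
  have he := weight_succ_left_le_mul #T #B
  have hU := one_le_weight #T #B
  by_cases hAfree : (c.graph r).CliqueFreeOn A 3
  · by_cases hXI : (c.graph r).IsIndepSet X
    · have hA_le := hind.card_le_of_cliqueFreeOn hP.ne_univ (hcA.of_insert_right hAb) hrB hAfree
      have hX_le : (#X : ℚ) ≤ weight #T #(insert b B) :=
        hind hP.left_ne_univ ((hc.comap _).of_insert_right hXI)
      rw [card_insert_of_notMem hb] at hX_le
      linarith [weight_succ_right_le_mul #T #B]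
    · obtain ⟨hA_le, hX_le⟩ := card_le_two_of_isCompleteBetween hfree_r hP.left hAr hXI
      have : (#A + #X : ℚ) ≤ 4 := mod_cast add_le_add hA_le hX_le
      linarith
  · have hA_le := hind.two_mul_card_le_of_pawFreeOn hP.ne_univ (hcA.of_insert_right hAb) hrB <|
      pawFreeOn_of_isCompleteBetween hfree_r hP.left hP.nonempty_left
    have hX_le : (#X : ℚ) ≤ 1 := mod_cast card_le_one_of_isCompleteBetween hfree_r hP.left hAfree
    linarith

theorem card_le_of_not_isIndepSet (hAr : ¬ (c.graph r).IsIndepSet A)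
    (hAb : ¬ (c.graph b).IsIndepSet A) : (Fintype.card V : ℚ) ≤ 17 * weight #T #B := by
  have hrb : r ≠ b := fun h ↦ hr (h ▸ mem_insert_self r B)
  have hfree_r := hc.free r (mem_insert_self r _)
  have hfree_b := hc.free b (mem_insert_of_mem (mem_insert_self b B))
  have hA := three_le_card_of_not_isIndepSet hrb hAr hAb
  have hrB : r ∉ B := fun h ↦ hr (mem_insert_of_mem h)
  have hbr : b ∉ insert r B := by simp_all [eq_comm]
  have hc' := hc
  rw [insert_comm] at hc'
  have hX_le : (#X : ℚ) ≤ weight #T #(insert b B) := hind hP.left_ne_univ <|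
    (hc.comap _).of_insert_right (isIndepSet_of_isCompleteBetween hfree_r hP.left hA hAr)
  have hY_le : (#Y : ℚ) ≤ weight #T #(insert r B) := hind hP.right_ne_univ <|
    (hc'.comap _).of_insert_right (isIndepSet_of_isCompleteBetween hfree_b hP.right hA hAb)
  rw [card_insert_of_notMem hb] at hX_le
  rw [card_insert_of_notMem hrB] at hY_le
  have hV := hP.cast_card_le
  have hp := weight_succ_right_le_mul #T #B
  have hpawr := pawFreeOn_of_isCompleteBetween hfree_r hP.left hP.nonempty_left
  have hpawb := pawFreeOn_of_isCompleteBetween hfree_b hP.right hP.nonempty_right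
  by_cases hAr' : (c.graph r).CliqueFreeOn A 3
  · linarith [hind.two_mul_card_le_of_cliqueFreeOn hP.ne_univ (hc.comap _) hr hb hAr' hpawb]
  by_cases hAb' : (c.graph b).CliqueFreeOn A 3
  · linarith [hind.two_mul_card_le_of_cliqueFreeOn hP.ne_univ (hc'.comap _) hbr hrB hAb'
      hpawr]
  have hX_le' : (#X : ℚ) ≤ 1 := mod_cast card_le_one_of_isCompleteBetween hfree_r hP.left hAr'
  have hY_le' : (#Y : ℚ) ≤ 1 := mod_cast card_le_one_of_isCompleteBetween hfree_b hP.right hAb'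
  linarith only [hV, hX_le', hY_le',
    hind.four_mul_card_le_of_pawFreeOn hP.ne_univ (hc.comap _) hr hb hpawr hpawb,
    hp, one_le_weight #T #B]

end IsGallaiPart

end Parts

section Partition

variable {V U C : Type*} {c : GallaiColoring V C} {H : SimpleGraph U} {T B : Finset C} {i r b : C}
  {s : Setoid V}

/-- A Gallai partition with colours `r` and `b` between the classes, in which no class is joined to
all the others in a single colour. -/
structure IsGallaiPartition (c : GallaiColoring V C) (s : Setoid V) (r b : C) : Prop where
  homogeneous : c.IsHomogeneous s
  color_eq : ∀ ⦃p q⦄, p ≠ q → (c.quotient s).color p q = r ∨ (c.quotient s).color p q = b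
  exists_color_ne : ∀ q i, ∃ p, q ≠ p ∧ (c.quotient s).color q p ≠ i

namespace IsGallaiPartition

theorem symm (hs : c.IsGallaiPartition s r b) : c.IsGallaiPartition s b r :=
  { hs with color_eq := fun _ _ hpq ↦ (hs.color_eq hpq).symm }

theorem adj_or_adj (hs : c.IsGallaiPartition s r b) (p q : Quotient s) (hpq : p ≠ q) :
    ((c.quotient s).graph r).Adj p q ∨ ((c.quotient s).graph b).Adj p q :=
  (hs.color_eq hpq).imp (⟨hpq, ·⟩) (⟨hpq, ·⟩)

theorem color_ne [Nonempty V] (hs : c.IsGallaiPartition s r b) : r ≠ b := by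
  rintro rfl
  obtain ⟨x⟩ := ‹Nonempty V›
  obtain ⟨p, hqp, hp⟩ := hs.exists_color_ne ⟦x⟧ r
  exact hp ((hs.color_eq hqp).elim id id)

theorem mem_or_mem [Nonempty V] (hs : c.IsGallaiPartition s r b) (hc : c.Admissible H T B) :
    r ∈ T ∨ r ∈ B := by
  obtain ⟨x⟩ := ‹Nonempty V›
  obtain ⟨p, hqp, hp⟩ := hs.exists_color_ne ⟦x⟧ b
  exact (hs.color_eq hqp).resolve_right hp ▸ (hc.comap _).color_mem hqp

end IsGallaiPartition

variable [Fintype V]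

open Classical in
/-- The class `q` of `s` as a finset. -/
noncomputable def fiber (s : Setoid V) (q : Quotient s) : Finset V := {x | ⟦x⟧ = q}

variable (c s) in
open Classical in
/-- The union of the classes joined to the class `q` in colour `i`. -/
noncomputable def joined (i : C) (q : Quotient s) : Finset V :=
  {y | ((c.quotient s).graph i).Adj q ⟦y⟧}

theorem mem_fiber {q : Quotient s} {x : V} : x ∈ fiber s q ↔ ⟦x⟧ = q := by
  simp [fiber]

theorem mem_joined {q : Quotient s} {y : V} :
    y ∈ c.joined s i q ↔ q ≠ ⟦y⟧ ∧ (c.quotient s).color q ⟦y⟧ = i := by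
  classical exact mem_filter_univ y

theorem fiber_nonempty (q : Quotient s) : (fiber s q).Nonempty :=
  ⟨q.out, mem_fiber.2 q.out_eq⟩

theorem joined_nonempty {p q : Quotient s} (hqp : q ≠ p) (hi : (c.quotient s).color q p = i) :
    (c.joined s i q).Nonempty :=
  ⟨p.out, by rw [mem_joined, p.out_eq]; exact ⟨hqp, hi⟩⟩

theorem IsHomogeneous.isCompleteBetween (hs : c.IsHomogeneous s) (i : C) (q : Quotient s) :
    (c.graph i).IsCompleteBetween (fiber s q) (c.joined s i q) := by
  intro x hx y hy
  obtain rfl := mem_fiber.1 (mem_coe.1 hx)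
  obtain ⟨hxy, hi⟩ := mem_joined.1 (mem_coe.1 hy)
  rw [hs.color_quotient fun h ↦ hxy (Quotient.sound h)] at hi
  exact ⟨fun h ↦ hxy (h ▸ rfl), hi⟩

theorem card_le_mul_of_card_fiber_le [Fintype (Quotient s)] {m : ℕ}
    (hm : Fintype.card (Quotient s) ≤ m) {N : ℚ} (hN : 0 ≤ N) (h : ∀ q, (#(fiber s q) : ℚ) ≤ N) :
    (Fintype.card V : ℚ) ≤ m * N := by
  classical
  calc (Fintype.card V : ℚ) = ∑ q, (#(fiber s q) : ℚ) := by
        rw [← card_univ, card_eq_sum_card_fiberwise (f := Quotient.mk s) (t := univ) (by simp)]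
        push_cast [fiber]
        congr!
    _ ≤ Fintype.card (Quotient s) * N := by
        simpa only [nsmul_eq_mul, card_univ] using sum_le_card_nsmul univ _ N fun q _ ↦ h q
    _ ≤ m * N := by gcongr

namespace IsGallaiPartition

theorem isGallaiPart (hs : c.IsGallaiPartition s r b) (q : Quotient s) :
    c.IsGallaiPart r b (fiber s q) (c.joined s r q) (c.joined s b q) where
  nonempty := fiber_nonempty q
  nonempty_left := by
    obtain ⟨p, hqp, hp⟩ := hs.exists_color_ne q b
    exact joined_nonempty hqp ((hs.color_eq hqp).resolve_right hp)
  nonempty_right := by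
    obtain ⟨p, hqp, hp⟩ := hs.exists_color_ne q r
    exact joined_nonempty hqp ((hs.color_eq hqp).resolve_left hp)
  left := hs.homogeneous.isCompleteBetween r q
  right := hs.homogeneous.isCompleteBetween b q
  card_le := by
    classical
    rw [← card_univ]
    refine (card_le_card fun x _ ↦ ?_).trans <|
      (card_union_le _ _).trans (Nat.add_le_add_right (card_union_le _ _) _)
    rw [mem_union, mem_union, mem_fiber, mem_joined, mem_joined]
    by_cases hx : ⟦x⟧ = q
    · exact .inl (.inl hx)
    · rcases hs.color_eq (Ne.symm hx) with h | h
      · exact .inl (.inr ⟨Ne.symm hx, h⟩)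
      · exact .inr ⟨Ne.symm hx, h⟩

variable [DecidableEq C]

theorem card_le_left_left (hs : c.IsGallaiPartition s r b) (hind : c.BoundedOnProperSubsets)
    (hc : c.Admissible GH2 (insert r (insert b T)) B) (hr : r ∉ insert b T) (hb : b ∉ T) :
    (Fintype.card V : ℚ) ≤ weight #(insert r (insert b T)) #B := by
  classical
  have hfree_r := hc.cliqueFree r (mem_insert_self r _)
  have hfree_b := hc.cliqueFree b (mem_insert_of_mem (mem_insert_self b T))
  have hquot : Fintype.card (Quotient s) ≤ 5 :=
    card_le_five_of_cliqueFree_three hs.adj_or_adj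
      ((hc.comap _).cliqueFree r (mem_insert_self r _))
      ((hc.comap _).cliqueFree b (mem_insert_of_mem (mem_insert_self b T)))
  rw [card_insert_of_notMem hr, card_insert_of_notMem hb, weight_add_two_left]
  refine card_le_mul_of_card_fiber_le hquot (zero_le_one.trans (one_le_weight _ _)) fun q ↦ ?_
  have hq := hs.isGallaiPart q
  exact hind hq.ne_univ <| ((hc.comap _).of_insert_left (hq.isIndepSet hfree_r)).of_insert_left
    (hq.symm.isIndepSet hfree_b)

theorem card_le_left_right (hs : c.IsGallaiPartition s r b) (hind : c.BoundedOnProperSubsets)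
    (hc : c.Admissible GH2 (insert r T) (insert b B)) (hr : r ∉ T) (hb : b ∉ B) :
    (Fintype.card V : ℚ) ≤ weight #(insert r T) #(insert b B) := by
  classical
  have hfree_r := hc.cliqueFree r (mem_insert_self r T)
  have hquot : Fintype.card (Quotient s) ≤ 8 :=
    card_le_eight_of_GH2_free hs.adj_or_adj ((hc.comap _).cliqueFree r (mem_insert_self r T))
      ((hc.comap _).free b (mem_insert_self b B))
  rw [card_insert_of_notMem hr, card_insert_of_notMem hb]
  by_cases hindep : ∀ q, (c.graph b).IsIndepSet (fiber s q)
  · have hV := card_le_mul_of_card_fiber_le hquot (zero_le_one.trans (one_le_weight #T #B))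
      fun q ↦ hind (hs.isGallaiPart q).ne_univ <| ((hc.comap _).of_insert_left
        ((hs.isGallaiPart q).isIndepSet hfree_r)).of_insert_right (hindep q)
    push_cast at hV
    linarith [two_mul_weight_le_succ_left #T #B, mul_weight_le_succ_right (#T + 1) #B,
      one_le_weight #T #B]
  · push Not at hindep
    obtain ⟨q, hq⟩ := hindep
    exact (hs.isGallaiPart q).card_le_of_not_isIndepSet_right hind hc hr hb hq

theorem card_le_right_right (hs : c.IsGallaiPartition s r b) (hind : c.BoundedOnProperSubsets)
    (hc : c.Admissible GH2 T (insert r (insert b B))) (hr : r ∉ insert b B) (hb : b ∉ B) :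
    (Fintype.card V : ℚ) ≤ weight #T #(insert r (insert b B)) := by
  classical
  have hrB : r ∉ B := fun h ↦ hr (mem_insert_of_mem h)
  have hbr : b ∉ insert r B := by simp_all [eq_comm]
  have hquot : Fintype.card (Quotient s) ≤ 17 :=
    card_le_seventeen_of_GH2_free hs.adj_or_adj
      ((hc.comap _).free r (mem_insert_self r _))
      ((hc.comap _).free b (mem_insert_of_mem (mem_insert_self b B)))
  rw [card_insert_of_notMem hr, card_insert_of_notMem hb, weight_add_two_right]
  by_cases hindep : ∀ q, (c.graph r).IsIndepSet (fiber s q) ∧ (c.graph b).IsIndepSet (fiber s q)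
  · exact card_le_mul_of_card_fiber_le hquot (zero_le_one.trans (one_le_weight _ _)) fun q ↦
      hind (hs.isGallaiPart q).ne_univ <|
        ((hc.comap _).of_insert_right (hindep q).1).of_insert_right (hindep q).2
  push Not at hindep
  obtain ⟨q, hq⟩ := hindep
  by_cases hqr : (c.graph r).IsIndepSet (fiber s q)
  · exact (hs.isGallaiPart q).symm.card_le_of_isIndepSet_right hind (insert_comm r b B ▸ hc) hbr
      hrB (hq hqr) hqr
  by_cases hqb : (c.graph b).IsIndepSet (fiber s q)
  · exact (hs.isGallaiPart q).card_le_of_isIndepSet_right hind hc hr hb hqr hqb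
  · exact (hs.isGallaiPart q).card_le_of_not_isIndepSet hind hc hr hb hqr hqb

end IsGallaiPartition

end Partition

theorem exists_eq_insert_insert {C : Type*} [DecidableEq C] {T : Finset C} {r b : C} (hr : r ∈ T)
    (hb : b ∈ T) (hrb : r ≠ b) :
    ∃ T', T = insert r (insert b T') ∧ r ∉ insert b T' ∧ b ∉ T' := by
  have hb' : b ∈ T.erase r := mem_erase.2 ⟨hrb.symm, hb⟩
  refine ⟨(T.erase r).erase b, ?_, ?_, notMem_erase b _⟩ <;> rw [insert_erase hb']
  · rw [insert_erase hr]
  · exact notMem_erase r T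

section Main

variable {V C : Type*} [Fintype V] {c : GallaiColoring V C} {T B : Finset C} {i r b : C}
  {s : Setoid V}

theorem IsHomogeneous.card_le_of_forall_color_eq (hs : c.IsHomogeneous s)
    (hind : c.BoundedOnProperSubsets) (hc : c.Admissible GH2 T B) {p q : Quotient s} (hqp : q ≠ p)
    (hi : ∀ p', q ≠ p' → (c.quotient s).color q p' = i) :
    (Fintype.card V : ℚ) ≤ weight #T #B := by
  classical
  have hq := fiber_nonempty q
  have hX := joined_nonempty hqp (hi p hqp)
  have h := hs.isCompleteBetween i q
  have hcard : Fintype.card V ≤ #(fiber s q) + #(c.joined s i q) := by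
    rw [← card_univ]
    refine (card_le_card fun x _ ↦ ?_).trans (card_union_le _ _)
    rw [mem_union, mem_fiber, mem_joined]
    exact or_iff_not_imp_left.2 fun hx ↦ ⟨Ne.symm hx, hi _ (Ne.symm hx)⟩
  rcases (hc.comap _).color_mem hqp with hT | hB
  · rw [show (c.comap _).color q p = i from hi p hqp] at hT
    rw [← insert_erase hT] at hc ⊢
    exact card_le_of_two_blocks_left hind hc (notMem_erase i T) hq hX hcard h
  · rw [show (c.comap _).color q p = i from hi p hqp] at hB
    rw [← insert_erase hB] at hc ⊢
    exact card_le_of_two_blocks_right hind hc (notMem_erase i B) hq hX hcard h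

theorem IsGallaiPartition.card_le [Nonempty V] (hs : c.IsGallaiPartition s r b)
    (hind : c.BoundedOnProperSubsets) (hc : c.Admissible GH2 T B) :
    (Fintype.card V : ℚ) ≤ weight #T #B := by
  classical
  have hrb := hs.color_ne
  rcases hs.mem_or_mem hc with hr | hr <;> rcases hs.symm.mem_or_mem hc with hb | hb
  · obtain ⟨T, rfl, hr, hb⟩ := exists_eq_insert_insert hr hb hrb
    exact hs.card_le_left_left hind hc hr hb
  · rw [← insert_erase hr, ← insert_erase hb] at hc ⊢
    exact hs.card_le_left_right hind hc (notMem_erase r T) (notMem_erase b B)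
  · rw [← insert_erase hr, ← insert_erase hb] at hc ⊢
    exact hs.symm.card_le_left_right hind hc (notMem_erase b T) (notMem_erase r B)
  · obtain ⟨B, rfl, hr, hb⟩ := exists_eq_insert_insert hr hb hrb
    exact hs.card_le_right_right hind hc hr hb

theorem Admissible.card_le (hc : c.Admissible GH2 T B) :
    (Fintype.card V : ℚ) ≤ weight #T #B := by
  induction hn : Fintype.card V using Nat.strong_induction_on generalizing V T B with
  | _ n ih =>
  subst hn
  rcases subsingleton_or_nontrivial V with hV | hV
  · exact (Nat.cast_le_one.2 (Fintype.card_le_one_iff_subsingleton.2 hV)).trans (one_le_weight _ _)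
  have hind : c.BoundedOnProperSubsets := fun A hA T' B' hcA ↦ by
    rw [← Fintype.card_coe]
    exact ih _ ((Fintype.card_coe A).trans_lt ((card_lt_iff_ne_univ A).2 hA)) hcA rfl
  obtain ⟨s, hs_top, hs, r, b, hrb⟩ := c.exists_isHomogeneous_two_colors
  by_cases h : ∀ q i, ∃ p, q ≠ p ∧ (c.quotient s).color q p ≠ i
  · refine IsGallaiPartition.card_le ⟨hs, fun p q hpq ↦ hrb _ _ fun h ↦ hpq ?_, h⟩ hind hc
    exact Quotient.out_equiv_out.1 h
  · push Not at h
    obtain ⟨q, i, hi⟩ := h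
    have : Nontrivial (Quotient s) :=
      not_subsingleton_iff_nontrivial.1 (Quotient.subsingleton_iff.not.2 hs_top)
    obtain ⟨p, hqp⟩ := exists_ne q
    exact hs.card_le_of_forall_color_eq hind hc hqp.symm hi

end Main
end GallaiColoring

/-! ### The lower bound -/

section Paley

variable {V W : Type*} {G : SimpleGraph V}

theorem top_free_of_hom {U : Type*} {G' : SimpleGraph W} (f : G →g G')
    (hG' : (⊤ : SimpleGraph U).Free G') : (⊤ : SimpleGraph U).Free G :=
  fun ⟨g⟩ ↦ hG' ⟨⟨f.comp g.toHom, Hom.injective_of_top_hom _⟩⟩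

theorem cliqueFree_of_hom {G' : SimpleGraph W} {n : ℕ} (f : G →g G') (hG' : G'.CliqueFree n) :
    G.CliqueFree n := by
  rw [← Fintype.card_fin n, cliqueFree_iff_top_free] at hG' ⊢
  exact top_free_of_hom f hG'

theorem cliqueFree_three_of_forall
    (hG : ∀ x y, G.Adj x y → ∀ z, G.Adj x z → ¬ G.Adj y z) : G.CliqueFree 3 := by
  classical
  intro t ht
  obtain ⟨x, y, z, hxy, hxz, hyz, -⟩ := is3Clique_iff.1 ht
  exact hG x y hxy z hxz hyz

theorem cliqueFree_four_of_forall
    (hG : ∀ x y, G.Adj x y → ∀ z, G.Adj x z → G.Adj y z → ∀ w, G.Adj x w → G.Adj y w →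
      ¬ G.Adj z w) : G.CliqueFree 4 := by
  refine cliqueFree_iff.2 ⟨fun f ↦ ?_⟩
  have adj {i j : Fin 4} (hij : i ≠ j) : G.Adj (f i) (f j) := f.toHom.map_adj hij
  exact hG (f 0) (f 1) (adj (by decide)) (f 2) (adj (by decide)) (adj (by decide)) (f 3)
    (adj (by decide)) (adj (by decide)) (adj (by decide))

/-- The Paley graph on the integers modulo `n`, for a prime `n` congruent to `1` modulo `4`. -/
def paleyGraph (n : ℕ) [NeZero n] : SimpleGraph (Fin n) := circulantGraph {x | IsSquare x}

instance (n : ℕ) [NeZero n] : DecidableRel (paleyGraph n).Adj := fun x y ↦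
  inferInstanceAs (Decidable (x ≠ y ∧ (IsSquare (x - y) ∨ IsSquare (y - x))))

theorem cliqueFree_three_paleyGraph : (paleyGraph 5).CliqueFree 3 :=
  cliqueFree_three_of_forall (by decide +kernel)

theorem cliqueFree_three_compl_paleyGraph : (paleyGraph 5)ᶜ.CliqueFree 3 :=
  cliqueFree_three_of_forall (by decide +kernel)

theorem cliqueFree_four_paleyGraph : (paleyGraph 17).CliqueFree 4 :=
  cliqueFree_four_of_forall (by decide +kernel)

theorem cliqueFree_four_compl_paleyGraph : (paleyGraph 17)ᶜ.CliqueFree 4 :=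
  cliqueFree_four_of_forall (by decide +kernel)

end Paley

namespace GallaiColoring

section LowerBound

variable {V W C : Type*} {T T' B B' : Finset C} {i j : C} {c : GallaiColoring V C}
  {d : GallaiColoring W C}

open Classical in
/-- The substitution of a copy of `c` for every vertex of `d`. -/
noncomputable def lex (d : GallaiColoring W C) (c : GallaiColoring V C) :
    GallaiColoring (W × V) C where
  color x y := if x.1 = y.1 then c.color x.2 y.2 else d.color x.1 y.1
  color_comm x y := by simp only [eq_comm, c.color_comm, d.color_comm]
  no_rainbow := by
    rintro ⟨x, x'⟩ ⟨y, y'⟩ ⟨z, z'⟩ hxy hxz hyz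
    rcases eq_or_ne x y with rfl | h₁
    · rcases eq_or_ne x z with rfl | h₂
      · simpa using c.no_rainbow (by simpa using hxy) (by simpa using hxz) (by simpa using hyz)
      · simp [h₂]
    · rcases eq_or_ne x z with rfl | h₂
      · simp [h₁, h₁.symm, d.color_comm]
      · rcases eq_or_ne y z with rfl | h₃
        · simp [h₁]
        · simpa [h₁, h₂, h₃] using d.no_rainbow h₁ h₂ h₃

open Classical in
/-- The colouring by `i` on the edges of `G` and `j` on all others. -/
noncomputable def ofGraph (G : SimpleGraph V) (i j : C) : GallaiColoring V C where
  color x y := if G.Adj x y then i else j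
  color_comm x y := by simp only [G.adj_comm]
  no_rainbow x y z _ _ _ := by split_ifs <;> simp

theorem Admissible.mem_union [DecidableEq C] {U : Type*} {H : SimpleGraph U}
    (hc : c.Admissible H T B) {x y : V} (hxy : x ≠ y) : c.color x y ∈ T ∪ B :=
  Finset.mem_union.2 (hc.color_mem hxy)

section Lex

variable {U : Type*} [DecidableEq C] (hd : d.Admissible (⊤ : SimpleGraph U) T B)
  (hc : c.Admissible (⊤ : SimpleGraph U) T' B') (h : Disjoint (T ∪ B) (T' ∪ B'))

include hc h in
theorem Admissible.nonempty_hom_fst (hi : i ∈ T ∪ B) :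
    Nonempty ((d.lex c).graph i →g d.graph i) := by
  refine ⟨⟨Prod.fst, fun {x y} hxy ↦ ?_⟩⟩
  have hne : x.1 ≠ y.1 := fun heq ↦ disjoint_left.1 h hi <| by
    rw [← hxy.2, show (d.lex c).color x y = c.color x.2 y.2 from if_pos heq]
    exact hc.mem_union fun h ↦ hxy.1 (Prod.ext heq h)
  exact ⟨hne, (if_neg hne).symm.trans hxy.2⟩

include hd h in
theorem Admissible.nonempty_hom_snd (hi : i ∈ T' ∪ B') :
    Nonempty ((d.lex c).graph i →g c.graph i) := by
  refine ⟨⟨Prod.snd, fun {x y} hxy ↦ ?_⟩⟩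
  have heq : x.1 = y.1 := by
    by_contra hne
    refine disjoint_right.1 h hi ?_
    rw [← hxy.2, show (d.lex c).color x y = d.color x.1 y.1 from if_neg hne]
    exact hd.mem_union hne
  exact ⟨fun h ↦ hxy.1 (Prod.ext heq h), (if_pos heq).symm.trans hxy.2⟩

include hd hc h in
theorem Admissible.lex : (d.lex c).Admissible (⊤ : SimpleGraph U) (T ∪ T') (B ∪ B') where
  disjoint := by
    have := h
    simp only [disjoint_union_left, disjoint_union_right] at this ⊢
    exact ⟨⟨hd.disjoint, this.1.2.symm⟩, this.2.1, hc.disjoint⟩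
  color_mem x y hxy := by
    by_cases heq : x.1 = y.1
    · rw [show (d.lex c).color x y = c.color x.2 y.2 from if_pos heq]
      exact (hc.color_mem fun h ↦ hxy (Prod.ext heq h)).imp (mem_union_right T) (mem_union_right B)
    · rw [show (d.lex c).color x y = d.color x.1 y.1 from if_neg heq]
      exact (hd.color_mem heq).imp (mem_union_left T') (mem_union_left B')
  cliqueFree i hi := by
    rcases Finset.mem_union.1 hi with hi | hi
    · obtain ⟨f⟩ := hc.nonempty_hom_fst h (mem_union_left B hi)
      exact cliqueFree_of_hom f (hd.cliqueFree i hi)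
    · obtain ⟨f⟩ := hd.nonempty_hom_snd h (mem_union_left B' hi)
      exact cliqueFree_of_hom f (hc.cliqueFree i hi)
  free i hi := by
    rcases Finset.mem_union.1 hi with hi | hi
    · obtain ⟨f⟩ := hc.nonempty_hom_fst h (mem_union_right T hi)
      exact top_free_of_hom f (hd.free i hi)
    · obtain ⟨f⟩ := hd.nonempty_hom_snd h (mem_union_right T' hi)
      exact top_free_of_hom f (hc.free i hi)

end Lex

theorem graph_ofGraph_left (G : SimpleGraph V) (hij : i ≠ j) : (ofGraph G i j).graph i = G := by
  ext x y
  simp only [graph, ofGraph, ite_eq_left_iff, hij.symm, imp_false, not_not]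
  exact and_iff_right_of_imp Adj.ne

theorem graph_ofGraph_right (G : SimpleGraph V) (hij : i ≠ j) :
    (ofGraph G i j).graph j = Gᶜ := by
  ext x y
  simp only [graph, ofGraph, ite_eq_right_iff, hij, imp_false, compl_adj]

variable {U : Type*} {H : SimpleGraph U} {G : SimpleGraph V}

theorem color_ofGraph_mem [DecidableEq C] (x y : V) :
    (ofGraph G i j).color x y ∈ ({i, j} : Finset C) := by
  simp only [ofGraph, mem_insert, mem_singleton]
  split_ifs <;> simp

theorem admissible_ofGraph_left [DecidableEq C] (hij : i ≠ j) (hG : G.CliqueFree 3)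
    (hG' : Gᶜ.CliqueFree 3) : (ofGraph G i j).Admissible H {i, j} ∅ where
  disjoint := disjoint_empty_right _
  color_mem x y _ := .inl (color_ofGraph_mem x y)
  cliqueFree l hl := by
    obtain rfl | rfl : l = i ∨ l = j := by simpa only [mem_insert, mem_singleton] using hl
    · rwa [graph_ofGraph_left G hij]
    · rwa [graph_ofGraph_right G hij]
  free := by simp

theorem admissible_ofGraph_right [DecidableEq C] (hij : i ≠ j) (hG : H.Free G) (hG' : H.Free Gᶜ) :
    (ofGraph G i j).Admissible H ∅ {i, j} where
  disjoint := disjoint_empty_left _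
  color_mem x y _ := .inr (color_ofGraph_mem x y)
  cliqueFree := by simp
  free l hl := by
    obtain rfl | rfl : l = i ∨ l = j := by simpa only [mem_insert, mem_singleton] using hl
    · rwa [graph_ofGraph_left G hij]
    · rwa [graph_ofGraph_right G hij]

end LowerBound

section Realizable

variable {C : Type*} {T T' B B' : Finset C} {N N' : ℕ}

/-- Some Gallai colouring on `N` vertices avoids triangles in the colours of `T` and copies of `K₄`
in the colours of `B`, and uses no other colours. -/
def Realizable (T B : Finset C) (N : ℕ) : Prop :=
  ∃ c : GallaiColoring (Fin N) C, c.Admissible (⊤ : SimpleGraph (Fin 4)) T B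

theorem Realizable.union [DecidableEq C] (h₁ : Realizable T B N) (h₂ : Realizable T' B' N')
    (h : Disjoint (T ∪ B) (T' ∪ B')) : Realizable (T ∪ T') (B ∪ B') (N * N') := by
  obtain ⟨d, hd⟩ := h₁
  obtain ⟨c, hc⟩ := h₂
  exact ⟨_, (hd.lex hc h).comap finProdFinEquiv.symm.toEmbedding⟩

theorem realizable_pair_left [DecidableEq C] {i j : C} (hij : i ≠ j) : Realizable {i, j} ∅ 5 :=
  ⟨_, admissible_ofGraph_left hij cliqueFree_three_paleyGraph cliqueFree_three_compl_paleyGraph⟩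

theorem realizable_pair_right [DecidableEq C] {i j : C} (hij : i ≠ j) : Realizable ∅ {i, j} 17 :=
  ⟨_, admissible_ofGraph_right hij (cliqueFree_iff_top_free.1 cliqueFree_four_paleyGraph)
    (cliqueFree_iff_top_free.1 cliqueFree_four_compl_paleyGraph)⟩

theorem realizable_singleton_left (i : C) : Realizable {i} ∅ 2 :=
  ⟨⟨fun _ _ ↦ i, fun _ _ ↦ rfl, fun _ _ _ _ _ _ ↦ .inl rfl⟩, disjoint_empty_right _,
    fun _ _ _ ↦ .inl (mem_singleton_self i), fun _ _ ↦ cliqueFree_of_card_lt (by simp), by simp⟩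

theorem realizable_empty [Nonempty C] : Realizable (∅ : Finset C) ∅ 1 :=
  ⟨⟨fun _ _ ↦ Classical.arbitrary C, fun _ _ ↦ rfl, fun _ _ _ _ _ _ ↦ .inl rfl⟩,
    disjoint_empty_left _, fun x y hxy ↦ (hxy (Subsingleton.elim x y)).elim, by simp, by simp⟩

theorem realizable_triangleBound [Nonempty C] (T : Finset C) :
    Realizable T ∅ (triangleBound #T) := by
  classical
  induction hn : #T using triangleBound.induct generalizing T with
  | case1 => rw [card_eq_zero.1 hn]; exact realizable_empty
  | case2 =>
    obtain ⟨i, rfl⟩ := card_eq_one.1 hn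
    exact realizable_singleton_left i
  | case3 n ih =>
    obtain ⟨i, T', hi, rfl, hT'⟩ := card_eq_succ.1 hn
    obtain ⟨j, T, hj, rfl, hT⟩ := card_eq_succ.1 hT'
    rw [mem_insert, not_or] at hi
    have := (realizable_pair_left hi.1).union (ih T hT) (by simp [hi.2, hj])
    rwa [empty_union, insert_union, singleton_union] at this

theorem realizable_triangleBound_mul_pow [Nonempty C] (hTB : Disjoint T B) {n : ℕ}
    (hB : #B = 2 * n) : Realizable T B (triangleBound #T * 17 ^ n) := by
  classical
  induction n generalizing B with
  | zero =>
    rw [card_eq_zero.1 hB]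
    simpa using realizable_triangleBound T
  | succ n ih =>
    obtain ⟨i, B', hi, rfl, hB'⟩ := card_eq_succ.1 hB
    obtain ⟨j, B, hj, rfl, hcard⟩ := card_eq_succ.1 hB'
    rw [mem_insert, not_or] at hi
    rw [disjoint_insert_right, disjoint_insert_right] at hTB
    have := (ih hTB.2.2 hcard).union (realizable_pair_right hi.1) (by simp [*])
    rwa [union_empty, union_comm B, insert_union, singleton_union, mul_assoc, ← pow_succ] at this

end Realizable

end GallaiColoring

/-! ### The Gallai-Ramsey number -/

namespace GallaiColoring

section GallaiRamseyNumber

variable {k r n N : ℕ} {H : SimpleGraph (Fin 5)}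

theorem isGallaiColoring (c : GallaiColoring (Fin n) (Fin k)) : IsGallaiColoring c.color := by
  refine ⟨c.color_comm, fun ⟨x, y, z, hxy, hxz, hyz, h₁, h₂, h₃⟩ ↦ ?_⟩
  rcases c.no_rainbow hxy hxz hyz with h | h | h
  exacts [h₁ h, h₂ h, h₃ h]

theorem exists_color_eq {f : Fin n → Fin n → Fin k} (hf : IsGallaiColoring f) :
    ∃ c : GallaiColoring (Fin n) (Fin k), c.color = f := by
  refine ⟨⟨f, hf.1, fun x y z hxy hxz hyz ↦ ?_⟩, rfl⟩
  by_contra! h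
  exact hf.2 ⟨x, y, z, hxy, hxz, hyz, h⟩

theorem hasMonoCopy_iff {U : Type} (F : SimpleGraph U) (c : GallaiColoring (Fin n) (Fin k))
    (i : Fin k) : HasMonoCopy F c.color i ↔ F ⊑ c.graph i where
  mp := fun ⟨f, hf, h⟩ ↦ ⟨⟨⟨f, fun {a b} hab ↦ ⟨hf.ne hab.ne, h a b hab⟩⟩, hf⟩⟩
  mpr := fun ⟨f⟩ ↦ ⟨f, f.injective, fun _ _ hab ↦ (f.toHom.map_adj hab).2⟩

/-- The colours in which `mixKH k r H` forbids `H`. -/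
def hColors (k r : ℕ) : Finset (Fin k) := {i | (i : ℕ) < r}

theorem card_hColors (hr : r ≤ k) : #(hColors k r) = r := by
  rw [hColors, Fin.card_filter_val_lt, min_eq_right hr]

theorem card_compl_hColors (hr : r ≤ k) : #(hColors k r)ᶜ = k - r := by
  rw [card_compl, Fintype.card_fin, card_hColors hr]

theorem forall_not_hasMonoCopy_iff (c : GallaiColoring (Fin n) (Fin k)) :
    (∀ i, ¬ HasMonoCopy (mixKH k r H i).2 c.color i) ↔
      c.Admissible H (hColors k r)ᶜ (hColors k r) := by
  have iff_of_mem {i} (hi : i ∈ hColors k r) :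
      HasMonoCopy (mixKH k r H i).2 c.color i ↔ H ⊑ c.graph i := by
    rw [mixKH, if_pos (mem_filter_univ i |>.1 hi), hasMonoCopy_iff]
  have iff_of_notMem {i} (hi : i ∉ hColors k r) :
      HasMonoCopy (mixKH k r H i).2 c.color i ↔ ¬ (c.graph i).CliqueFree 3 := by
    rw [mixKH, if_neg fun h ↦ hi (mem_filter_univ i |>.2 h), hasMonoCopy_iff,
      not_cliqueFree_iff_top_isContained, GK3]
  refine ⟨fun h ↦ ⟨disjoint_compl_left, fun x y _ ↦ ?_, fun i hi ↦ ?_, fun i hi ↦ ?_⟩,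
    fun hc i ↦ ?_⟩
  · rw [mem_compl]
    exact (em _).symm
  · exact not_not.1 <| (iff_of_notMem (mem_compl.1 hi)).not.1 (h i)
  · exact (iff_of_mem hi).not.1 (h i)
  · by_cases hi : i ∈ hColors k r
    · exact (iff_of_mem hi).not.2 (hc.free i hi)
    · exact (iff_of_notMem hi).not.2 <| not_not.2 (hc.cliqueFree i (mem_compl.2 hi))

theorem GR_mixKH_eq_add_one
    (hle : ∀ {n} {c : GallaiColoring (Fin n) (Fin k)},
      c.Admissible H (hColors k r)ᶜ (hColors k r) → n ≤ N)
    {c : GallaiColoring (Fin N) (Fin k)} (hc : c.Admissible H (hColors k r)ᶜ (hColors k r)) :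
    GR k (mixKH k r H) = N + 1 := by
  refine IsLeast.csInf_eq ⟨fun f hf ↦ ?_, fun n hn ↦ ?_⟩
  · obtain ⟨c, rfl⟩ := exists_color_eq hf
    by_contra! h
    exact N.not_succ_le_self <| hle ((forall_not_hasMonoCopy_iff c).1 h)
  · by_contra! hnN
    obtain ⟨i, hi⟩ := hn _ (c.comap (Fin.castLEEmb (Nat.le_of_lt_succ hnN))).isGallaiColoring
    exact (forall_not_hasMonoCopy_iff _).2 (hc.comap _) i hi

end GallaiRamseyNumber

end GallaiColoring

theorem top_isContained_GH1 : (⊤ : SimpleGraph (Fin 4)) ⊑ GH1 := by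
  refine ⟨⟨⟨Fin.castSucc, fun {i j} hij ↦ ?_⟩, Fin.castSucc_injective 4⟩⟩
  revert i j
  simp only [top_adj, GH1, fromRel_adj]
  decide

theorem GH1_isContained_GH2 : GH1 ⊑ GH2 := by
  have hf : Function.Injective (![0, 4, 2, 3, 1] : Fin 5 → Fin 5) := by decide
  refine ⟨⟨⟨![0, 4, 2, 3, 1], fun {i j} hij ↦ ?_⟩, hf⟩⟩
  revert i j
  simp only [GH1, GH2, sdiff_adj, top_adj, fromRel_adj]
  decide

end GallaiRamsey

open GallaiRamsey GallaiColoring in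
theorem GR_mixKH_odd_even_general {H : SimpleGraph (Fin 5)} (hH : (⊤ : SimpleGraph (Fin 4)) ⊑ H)
    (hH' : H ⊑ GH2) {k r : ℕ} (hk : 1 ≤ k) (hr : r ≤ k) (h2 : Even r) :
    GR k (mixKH k r H) = triangleBound (k - r) * 17 ^ (r / 2) + 1 := by
  have : NeZero k := ⟨Nat.one_le_iff_ne_zero.1 hk⟩
  have hr2 : r = 2 * (r / 2) := (Nat.two_mul_div_two_of_even h2).symm
  have hlower := realizable_triangleBound_mul_pow (disjoint_compl_left (a := hColors k r))
    ((card_hColors hr).trans hr2)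
  rw [card_compl_hColors hr] at hlower
  obtain ⟨c, hc⟩ := hlower
  refine GR_mixKH_eq_add_one (fun {n c} hc ↦ ?_) (hc.mono hH)
  have hcard := (hc.mono hH').card_le
  rw [Fintype.card_fin, card_compl_hColors hr, card_hColors hr, weight, hr2, hBound_two_mul,
    ← hr2] at hcard
  exact_mod_cast hcard

/-- Theorem 1.4, case (a₂): for H ∈ {H₁, H₂}, k ≥ 1, 0 ≤ r ≤ k with k - r odd and r
even, GR_k((k-r)K₃, rH) = 2·5^((k-r-1)/2)·17^(r/2) + 1. -/
theorem GR_mixKH_odd_even (H : SimpleGraph (Fin 5)) (hH : H = GH1 ∨ H = GH2)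
    (k r : ℕ) (hk : 1 ≤ k) (hr : r ≤ k) (h1 : Odd (k - r)) (h2 : Even r) :
    GR k (mixKH k r H) = 2 * 5 ^ ((k - r - 1) / 2) * 17 ^ (r / 2) + 1 := by
  obtain ⟨m, hm⟩ := h1
  have hK4 := GallaiRamsey.top_isContained_GH1
  have h12 := GallaiRamsey.GH1_isContained_GH2
  have hH' : (⊤ : SimpleGraph (Fin 4)) ⊑ H ∧ H ⊑ GH2 := by
    rcases hH with rfl | rfl
    exacts [⟨hK4, h12⟩, ⟨hK4.trans h12, .refl _⟩]
  rw [GR_mixKH_odd_even_general hH'.1 hH'.2 hk hr h2, hm,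
    GallaiRamsey.triangleBound_two_mul_add_one, Nat.add_sub_cancel,
    Nat.mul_div_cancel_left m two_pos]
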